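/- Suppose: g is bounded above; g* is differentiable with |（g*)'(ω)| ≤ C_g |g*(ω)| for all ω (some constant C_g); there exists ω_0 > 0 such that the argument ρ(ω) = arg(φ*(ω)) is twice continuously differentiable for |ω| > ω_0 with |ρ(ω)|, |ρ'(ω)|, |ρ''(ω)| ≤ ρ̄ < ∞; |g*(ω)| ≤ C_{g2} (ω²+1)^{−α/2} for all ω with C_{g2} > 0, α ≥ 0; and |φ*(ω)| ≥ C_{φ1} (ω²+1)^{−a/2} for all ω with C_{φ1} > 0 and a < α + 1/2. Then for all s ≥ 0, B > 0 there is a constant C > 0 (independent of n) such that the minimax risk satisfies R_n(Ω_s(B)) ≥ C · n^{−(2s+2a−1)/(2s+2α)} for all sufficiently large n. -/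

import Mathlib

open MeasureTheory Finset

/-- Fourier transform `t*(ω) = ∫ e^{iωx} t(x) dx` of a real-valued function. -/
noncomputable def ft (t : ℝ → ℝ) (ω : ℝ) : ℂ :=
  ∫ x : ℝ, Complex.exp (Complex.I * (ω : ℂ) * (x : ℂ)) * (t x : ℂ)

noncomputable def ftc (t : ℝ → ℂ) (ω : ℝ) : ℂ :=
  ∫ x : ℝ, Complex.exp (Complex.I * (ω : ℂ) * (x : ℂ)) * t x

open FourierTransform SchwartzMap in
theorem L2_fourier_ae (F : ℝ → ℂ) (h1 : Integrable F) (h2 : MemLp F 2) :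
    ((𝓕 (h2.toLp F) : Lp ℂ 2 (volume : Measure ℝ)) : ℝ → ℂ) =ᵐ[volume] 𝓕 F := by
  have hcont : Continuous (𝓕 F) := by
    exact VectorFourier.fourierIntegral_continuous Real.continuous_fourierChar
      (by exact continuous_inner) h1
  refine ae_eq_of_integral_contDiff_smul_eq
    ((Lp.memLp _).locallyIntegrable (by norm_num)) hcont.locallyIntegrable ?_
  intro φ hφ hφc
  have hφ' : ContDiff ℝ (⊤ : ℕ∞) (fun x => (φ x : ℂ)) := Complex.ofRealCLM.contDiff.comp hφ
  have hφc' : HasCompactSupport (fun x => (φ x : ℂ)) := hφc.comp_left Complex.ofReal_zero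
  set Ψ : 𝓢(ℝ, ℂ) := hφc'.toSchwartzMap hφ' with hΨ
  have hΨx : ∀ x, Ψ x = (φ x : ℂ) := fun x => rfl
  have key := congrArg (fun D : TemperedDistribution ℝ ℂ => D Ψ)
    (Lp.fourier_toTemperedDistribution_eq (h2.toLp F))
  simp only [TemperedDistribution.fourier_apply, Lp.toTemperedDistribution_apply] at key
  have e1 : ∫ x, φ x • (𝓕 (h2.toLp F) : Lp ℂ 2 (volume : Measure ℝ)) x =
      ∫ x, Ψ x • (𝓕 (h2.toLp F) : Lp ℂ 2 (volume : Measure ℝ)) x := by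
    congr 1
  rw [e1, ← key]
  have e2 : ∫ x, (𝓕 Ψ) x • (h2.toLp F) x = ∫ x, 𝓕 (Ψ : ℝ → ℂ) x • F x := by
    apply integral_congr_ae
    filter_upwards [h2.coeFn_toLp] with x hx
    rw [hx]
    rfl
  rw [e2]
  have := VectorFourier.integral_fourierIntegral_smul_eq_flip (L := innerₗ ℝ) (μ := volume)
    (ν := volume) (f := (Ψ : ℝ → ℂ)) (g := F) Real.continuous_fourierChar
    (by exact continuous_inner) Ψ.integrable h1
  rw [flip_innerₗ] at this
  exact this

open FourierTransform in
theorem ftc_eq (F : ℝ → ℂ) (ω : ℝ) : ftc F ω = 𝓕 F ((-(2 * Real.pi)⁻¹) * ω) := by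
  rw [Real.fourier_eq' F]
  unfold ftc
  congr 1
  ext x
  rw [smul_eq_mul]
  congr 2
  simp
  have : (Real.pi : ℂ) ≠ 0 := by exact_mod_cast Real.pi_ne_zero
  field_simp

theorem ft_eq (t : ℝ → ℝ) (ω : ℝ) : ft t ω = ftc (fun x => (t x : ℂ)) ω := rfl

theorem ftc_continuous (F : ℝ → ℂ) (h1 : Integrable F) : Continuous (ftc F) := by
  have hcont : Continuous (FourierTransform.fourier F : ℝ → ℂ) := by
    exact VectorFourier.fourierIntegral_continuous Real.continuous_fourierChar
      (by exact continuous_inner) h1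
  have : ftc F = fun ω => FourierTransform.fourier F ((-(2 * Real.pi)⁻¹) * ω) := by
    ext ω; exact ftc_eq F ω
  rw [this]
  fun_prop

theorem norm_exp_I (ω x : ℝ) : ‖Complex.exp (Complex.I * (ω : ℂ) * (x : ℂ))‖ = 1 := by
  have : Complex.I * (ω : ℂ) * (x : ℂ) = ((ω * x : ℝ) : ℂ) * Complex.I := by push_cast; ring
  rw [this, Complex.norm_exp_ofReal_mul_I]

theorem ftc_norm_le (F : ℝ → ℂ) (ω : ℝ) : ‖ftc F ω‖ ≤ ∫ x, ‖F x‖ := by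
  unfold ftc
  refine (norm_integral_le_integral_norm _).trans (le_of_eq ?_)
  congr 1
  ext x
  rw [norm_mul, norm_exp_I, one_mul]

open FourierTransform in
theorem ftc_plancherel (F : ℝ → ℂ) (h1 : Integrable F) (h2 : MemLp F 2) :
    Integrable (fun ω => ‖ftc F ω‖ ^ 2) ∧ ∫ ω, ‖ftc F ω‖ ^ 2 = 2 * Real.pi * ∫ x, ‖F x‖ ^ 2 := by
  have hae := L2_fourier_ae F h1 h2
  have hm : MemLp (𝓕 F) 2 := (memLp_congr_ae hae).1 (Lp.memLp _)
  have hI : Integrable (fun x => ‖𝓕 F x‖ ^ 2) := by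
    exact (memLp_two_iff_integrable_sq_norm hm.1).1 hm
  have hn : ∫ x, ‖𝓕 F x‖ ^ 2 = ∫ x, ‖F x‖ ^ 2 := by
    have h := Lp.norm_fourier_eq (h2.toLp F)
    have h' : ‖(𝓕 (h2.toLp F) : Lp ℂ 2 (volume : Measure ℝ))‖ ^ 2 = ‖h2.toLp F‖ ^ 2 := by rw [h]
    rw [← @inner_self_eq_norm_sq ℂ, ← @inner_self_eq_norm_sq ℂ, L2.inner_def, L2.inner_def] at h'
    rw [← integral_re (L2.integrable_inner _ _), ← integral_re (L2.integrable_inner _ _)] at h'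
    have e1 : ∫ x, ‖𝓕 F x‖ ^ 2 = ∫ x, RCLike.re (inner ℂ ((𝓕 (h2.toLp F) : Lp ℂ 2 (volume : Measure ℝ)) x) ((𝓕 (h2.toLp F) : Lp ℂ 2 (volume : Measure ℝ)) x)) := by
      apply integral_congr_ae
      filter_upwards [hae] with x hx
      rw [hx, inner_self_eq_norm_sq]
    have e2 : ∫ x, ‖F x‖ ^ 2 = ∫ x, RCLike.re (inner ℂ (h2.toLp F x) (h2.toLp F x)) := by
      apply integral_congr_ae
      filter_upwards [h2.coeFn_toLp] with x hx
      rw [hx, inner_self_eq_norm_sq]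
    rw [e1, e2, h']
  have hp := Real.pi_pos
  simp_rw [ftc_eq]
  constructor
  · exact hI.comp_mul_left' (by simp)
  · rw [Measure.integral_comp_mul_left (fun x => ‖𝓕 F x‖ ^ 2), hn]
    simp [abs_of_pos hp]

open FourierTransform in
theorem ftc_deriv (K K' : ℝ → ℂ) (hK : Integrable K) (hK' : Integrable K')
    (hd : ∀ x, HasDerivAt K (K' x) x) (ω : ℝ) : ‖ftc K' ω‖ = |ω| * ‖ftc K ω‖ := by
  have hdd : deriv K = K' := by ext x; exact (hd x).deriv
  have := Real.fourier_deriv hK (fun x => (hd x).differentiableAt) (by rw [hdd]; exact hK')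
  rw [ftc_eq, ftc_eq, ← hdd, this, norm_smul]
  congr 1
  have hp := Real.pi_pos
  simp [abs_of_pos hp]
  field_simp

theorem ftc_inversion (V : ℝ → ℂ) (hc : Continuous V) (hV : Integrable V) (hi : Integrable (ftc V))
    (ω : ℝ) : ftc (ftc V) ω = 2 * Real.pi * V (-ω) := by
  have hp := Real.pi_pos
  have hne : (-(2 * Real.pi)⁻¹) ≠ 0 := by simp
  have hiF : Integrable (FourierTransform.fourier V : ℝ → ℂ) := by
    have : (FourierTransform.fourier V : ℝ → ℂ) = fun x => ftc V ((-(2 * Real.pi)) * x) := by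
      ext x
      rw [ftc_eq]
      congr 1
      field_simp
    rw [this]
    exact hi.comp_mul_left' (by simp)
  have := congrFun (Continuous.fourierInv_fourier_eq hc hV hiF) (-ω)
  rw [← this, Real.fourierInv_eq']
  unfold ftc
  rw [← Complex.ofReal_ofNat, ← Complex.ofReal_mul]
  have h := Measure.integral_comp_mul_left (fun v : ℝ => Complex.exp (↑(2 * Real.pi * inner ℝ v (-ω)) * Complex.I) • (FourierTransform.fourier V : ℝ → ℂ) v) (-(2 * Real.pi)⁻¹)
  have h2 : |(-(2 * Real.pi)⁻¹)⁻¹| = 2 * Real.pi := by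
    simp [abs_of_pos hp]
  rw [h2] at h
  rw [← Complex.real_smul, ← h]
  congr 1
  ext x
  rw [smul_eq_mul, ← ftc_eq]
  show _ * ftc V x = _ * ftc V x
  congr 2
  simp
  have : (Real.pi : ℂ) ≠ 0 := by exact_mod_cast Real.pi_ne_zero
  field_simp

theorem bdd_supp {F : ℝ → ℂ} (hm : AEStronglyMeasurable F volume) {a b M : ℝ} (hab : a ≤ b)
    (hb : ∀ x, ‖F x‖ ≤ M) (h0 : ∀ x, x ∉ Set.Icc a b → F x = 0) :
    Integrable F ∧ MemLp F 2 ∧ ∫ x, ‖F x‖ ^ 2 ≤ M ^ 2 * (b - a) := by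
  have hi : ∀ c : ℝ, Integrable (Set.indicator (Set.Icc a b) (fun _ => c)) := fun c =>
    (integrable_indicator_iff measurableSet_Icc).2 (by simp)
  have hM : 0 ≤ M := (norm_nonneg _).trans (hb 0)
  have h2 : ∀ x, ‖F x‖ ^ 2 ≤ Set.indicator (Set.Icc a b) (fun _ => M ^ 2) x := by
    intro x
    by_cases hx : x ∈ Set.Icc a b
    · rw [Set.indicator_of_mem hx]
      have := hb x
      gcongr
    · rw [Set.indicator_of_notMem hx, h0 x hx]; simp
  have hs : Integrable (fun x => ‖F x‖ ^ 2) := by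
    refine (hi (M ^ 2)).mono' (hm.norm.pow 2) (Filter.Eventually.of_forall fun x => ?_)
    rw [Real.norm_of_nonneg (by positivity)]
    exact h2 x
  refine ⟨?_, (memLp_two_iff_integrable_sq_norm hm).2 hs, ?_⟩
  · refine (hi M).mono' hm (Filter.Eventually.of_forall fun x => ?_)
    by_cases hx : x ∈ Set.Icc a b
    · rw [Set.indicator_of_mem hx]; exact hb x
    · rw [Set.indicator_of_notMem hx, h0 x hx]; simp
  · refine (integral_mono hs (hi (M ^ 2)) h2).trans ?_
    rw [integral_indicator measurableSet_Icc]
    simp [hab, mul_comm]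

theorem ftc_weighted {K K' : ℝ → ℂ} {a b M : ℝ} (hab : a ≤ b)
    (hd : ∀ x, HasDerivAt K (K' x) x)
    (hb : ∀ x, ‖K x‖ ≤ M) (h0 : ∀ x, x ∉ Set.Icc a b → K x = 0)
    (hb' : ∀ x, ‖K' x‖ ≤ M) (h0' : ∀ x, x ∉ Set.Icc a b → K' x = 0) :
    Integrable K ∧ MemLp K 2 ∧ Integrable (fun x => (1 + x ^ 2) * ‖ftc K x‖ ^ 2) ∧
      ∫ x, (1 + x ^ 2) * ‖ftc K x‖ ^ 2 ≤ 4 * Real.pi * (M ^ 2 * (b - a)) := by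
  have hdd : deriv K = K' := by ext x; exact (hd x).deriv
  have hKc : Continuous K := continuous_iff_continuousAt.2 fun x => (hd x).continuousAt
  have hK'm : Measurable K' := by rw [← hdd]; exact measurable_deriv K
  obtain ⟨i1, m1, b1⟩ := bdd_supp hKc.aestronglyMeasurable hab hb h0
  obtain ⟨i2, m2, b2⟩ := bdd_supp hK'm.aestronglyMeasurable hab hb' h0'
  obtain ⟨p1, e1⟩ := ftc_plancherel K i1 m1
  obtain ⟨p2, e2⟩ := ftc_plancherel K' i2 m2
  have heq : (fun x => (1 + x ^ 2) * ‖ftc K x‖ ^ 2) =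
      fun x => ‖ftc K x‖ ^ 2 + ‖ftc K' x‖ ^ 2 := by
    ext x
    rw [ftc_deriv K K' i1 i2 hd, mul_pow, sq_abs]; ring
  refine ⟨i1, m1, ?_, ?_⟩
  · rw [heq]; exact p1.add p2
  · rw [heq, integral_add p1 p2, e1, e2]
    have := Real.pi_pos
    nlinarith

theorem L1_of_weighted {F : ℝ → ℂ} (hm : AEStronglyMeasurable F volume) {w : ℝ} (hw : 0 < w)
    (hi : Integrable (fun x => (1 + x ^ 2) * ‖F x‖ ^ 2))
    (hle : ∫ x, (1 + x ^ 2) * ‖F x‖ ^ 2 ≤ w ^ 2) :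
    Integrable F ∧ ∫ x, ‖F x‖ ≤ 3 * w := by
  have hpt : ∀ x : ℝ, ‖F x‖ ≤ (1 / (2 * w)) * ((1 + x ^ 2) * ‖F x‖ ^ 2) + (w / 2) * (1 + x ^ 2)⁻¹ := by
    intro x
    have h1 : 0 < 1 + x ^ 2 := by positivity
    have : (1 / (2 * w)) * ((1 + x ^ 2) * ‖F x‖ ^ 2) + (w / 2) * (1 + x ^ 2)⁻¹ - ‖F x‖ =
      ((1 + x ^ 2) * ‖F x‖ - w) ^ 2 / (2 * w * (1 + x ^ 2)) := by
      field_simp; ring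
    have h3 : 0 ≤ ((1 + x ^ 2) * ‖F x‖ - w) ^ 2 / (2 * w * (1 + x ^ 2)) := by positivity
    linarith
  have hI : Integrable (fun x : ℝ => (1 / (2 * w)) * ((1 + x ^ 2) * ‖F x‖ ^ 2) + (w / 2) * (1 + x ^ 2)⁻¹) :=
    (hi.const_mul _).add (integrable_inv_one_add_sq.const_mul _)
  have hF : Integrable F := hI.mono' hm (Filter.Eventually.of_forall hpt)
  refine ⟨hF, (integral_mono hF.norm hI hpt).trans ?_⟩
  rw [integral_add (hi.const_mul _) (integrable_inv_one_add_sq.const_mul _), integral_const_mul,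
    integral_const_mul, integral_univ_inv_one_add_sq]
  have hp := Real.pi_lt_four
  have : 1 / (2 * w) * ∫ x, (1 + x ^ 2) * ‖F x‖ ^ 2 ≤ 1 / (2 * w) * w ^ 2 := by gcongr
  have e : 1 / (2 * w) * w ^ 2 = w / 2 := by field_simp
  nlinarith

/-- convolution -/
noncomputable def cv (r w : ℝ → ℝ) (y : ℝ) : ℝ := ∫ θ : ℝ, r (y - θ) * w θ

open ContinuousLinearMap in
theorem cv_eq (r w : ℝ → ℝ) : cv r w = MeasureTheory.convolution w r (mul ℝ ℝ) volume := by
  ext y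
  unfold cv
  rw [convolution_def]
  congr 1; ext θ; simp [mul_comm]

theorem cv_integrable {r w : ℝ → ℝ} (hr : Integrable r) (hw : Integrable w) :
    Integrable (cv r w) := by
  rw [cv_eq]; exact hw.integrable_convolution _ hr

theorem cv_integral {r w : ℝ → ℝ} (hr : Integrable r) (hw : Integrable w) :
    ∫ x, cv r w x = (∫ x, r x) * ∫ x, w x := by
  rw [cv_eq, integral_convolution _ hw hr]; simp [mul_comm]

theorem cv_nonneg {r w : ℝ → ℝ} (hr : ∀ x, 0 ≤ r x) (hw : ∀ x, 0 ≤ w x) (y : ℝ) : 0 ≤ cv r w y :=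
  integral_nonneg fun θ => mul_nonneg (hr _) (hw _)

open ContinuousLinearMap in
theorem cv_ft {r w : ℝ → ℝ} (hr : Integrable r) (hw : Integrable w) (ω : ℝ) :
    ft (cv r w) ω = ft r ω * ft w ω := by
  have h := Real.fourier_mul_convolution_eq (R := ℂ) hw.ofReal hr.ofReal ((-(2 * Real.pi)⁻¹) * ω)
  rw [← ftc_eq, ← ftc_eq, ← ftc_eq] at h
  rw [ft_eq, ft_eq, ft_eq, mul_comm]
  rw [show (ftc (fun x => (w x : ℂ)) ω * ftc (fun x => (r x : ℂ)) ω) = _ from h.symm]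
  congr 1
  ext y
  rw [convolution_def]
  unfold cv
  rw [← integral_complex_ofReal]
  congr 1; ext θ; simp [mul_comm]

theorem shift_integrable {r : ℝ → ℝ} (hr : Integrable r) (y : ℝ) :
    Integrable (fun θ => r (y - θ)) := hr.comp_sub_left y

theorem mul_bdd_integrable {r w : ℝ → ℝ} (hr : Integrable r) (hw : AEStronglyMeasurable w volume)
    {M : ℝ} (hb : ∀ x, |w x| ≤ M) (y : ℝ) : Integrable (fun θ => r (y - θ) * w θ) :=
  (shift_integrable hr y).mul_bdd (c := M) hw (Filter.Eventually.of_forall hb)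

theorem bdd_mul_integrable {r w : ℝ → ℝ} (hw : Integrable w) (hr : AEStronglyMeasurable r volume)
    {M : ℝ} (hb : ∀ x, |r x| ≤ M) (y : ℝ) : Integrable (fun θ => r (y - θ) * w θ) := by
  refine hw.bdd_mul (c := M) ?_ (Filter.Eventually.of_forall fun θ => hb _)
  exact hr.comp_quasiMeasurePreserving (quasiMeasurePreserving_sub_left_of_right_invariant volume y)

theorem cv_ftc {g : ℝ → ℝ} {V : ℝ → ℂ} (hg : Integrable g) (hV : Integrable V) (y : ℝ) :
    ∫ θ, (g (y - θ) : ℂ) * ftc V θ = ftc (fun ω => V ω * ft g (-ω)) y := by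
  have hI : Integrable (Function.uncurry fun θ ω : ℝ =>
      Complex.exp (Complex.I * (θ : ℂ) * (ω : ℂ)) * ((g (y - θ) : ℂ) * V ω)) := by
    have h := (shift_integrable hg y).ofReal (𝕜 := ℂ) |>.mul_prod hV
    refine h.bdd_mul (c := 1) ?_ (Filter.Eventually.of_forall fun p => (norm_exp_I _ _).le)
    exact (by fun_prop : Continuous fun p : ℝ × ℝ => Complex.exp (Complex.I * (p.1 : ℂ) * (p.2 : ℂ))).aestronglyMeasurable
  have h := integral_integral_swap hI
  have e1 : ∫ θ, (g (y - θ) : ℂ) * ftc V θ = ∫ θ : ℝ, ∫ ω : ℝ,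
      Complex.exp (Complex.I * (θ : ℂ) * (ω : ℂ)) * ((g (y - θ) : ℂ) * V ω) := by
    congr 1; ext θ
    unfold ftc
    rw [← integral_const_mul]
    congr 1; ext ω; ring
  rw [e1, h, ftc]
  congr 1; ext ω
  rw [← integral_sub_left_eq_self _ volume y, ft, ← integral_const_mul, ← integral_const_mul]
  congr 1; ext ξ
  have : Complex.exp (Complex.I * ((y - ξ : ℝ) : ℂ) * ω) = Complex.exp (Complex.I * y * ω) * Complex.exp (Complex.I * ((-ω : ℝ) : ℂ) * ξ) := by
    rw [← Complex.exp_add]; congr 1; push_cast; ring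
  rw [this, sub_sub_cancel]
  ring

noncomputable def gs (τ : ℝ) : ℝ → ℝ := ProbabilityTheory.gaussianPDFReal 0 (τ ^ 2).toNNReal

theorem gs_nonneg (τ x : ℝ) : 0 ≤ gs τ x := ProbabilityTheory.gaussianPDFReal_nonneg _ _ _
theorem gs_integrable (τ : ℝ) : Integrable (gs τ) := ProbabilityTheory.integrable_gaussianPDFReal _ _
theorem gs_integral {τ : ℝ} (h : 0 < τ) : ∫ x, gs τ x = 1 :=
  ProbabilityTheory.integral_gaussianPDFReal_eq_one _ (by simp; positivity)
theorem gs_bdd (τ : ℝ) : ∃ M, ∀ x, |gs τ x| ≤ M := by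
  refine ⟨(Real.sqrt (2 * Real.pi * (τ ^ 2).toNNReal))⁻¹, fun x => ?_⟩
  rw [abs_of_nonneg (gs_nonneg _ _), gs, ProbabilityTheory.gaussianPDFReal]
  refine mul_le_of_le_one_right (by positivity) ?_
  rw [Real.exp_le_one_iff]
  apply div_nonpos_of_nonpos_of_nonneg
  · simp; positivity
  · positivity
theorem gs_ft {τ : ℝ} (h : 0 < τ) (ω : ℝ) : ft (gs τ) ω = (Real.exp (-(τ * ω) ^ 2 / 2) : ℝ) := by
  have h1 := ProbabilityTheory.charFun_gaussianReal (μ := 0) (v := (τ ^ 2).toNNReal) ω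
  rw [charFun_apply_real, ProbabilityTheory.integral_gaussianReal_eq_integral_smul (by simp; positivity)] at h1
  rw [ft]
  have e : Complex.exp (ω * ((0:ℝ):ℂ) * Complex.I - (τ ^ 2).toNNReal * ω ^ 2 / 2) = (Real.exp (-(τ * ω) ^ 2 / 2) : ℝ) := by
    rw [Complex.ofReal_exp]
    have : (((τ ^ 2).toNNReal : ℝ) : ℂ) = (τ : ℂ) ^ 2 := by
      rw [Real.coe_toNNReal _ (by positivity)]; push_cast; rfl
    congr 1
    push_cast
    rw [this]; ring
  rw [← e, ← h1]
  congr 1; ext x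
  rw [Complex.real_smul, mul_comm, gs]
  congr 2
  ring

theorem lower_conv {r : ℝ → ℝ} (h0 : ∀ x, 0 ≤ r x) (hr : Integrable r) (h1 : ∫ x, r x = 1) :
    ∃ c, 0 < c ∧ ∀ y, c * (1 + y ^ 2)⁻¹ ≤ ∫ θ, r (y - θ) * (1 + θ ^ 2)⁻¹ := by
  have hb : ∀ ξ : ℝ, |(1 + ξ ^ 2)⁻¹| ≤ 1 := by
    intro ξ
    rw [abs_of_nonneg (by positivity)]
    apply inv_le_one_of_one_le₀
    nlinarith [sq_nonneg ξ]
  have hc : Continuous fun ξ : ℝ => (1 + ξ ^ 2)⁻¹ := by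
    refine Continuous.inv₀ (by fun_prop) (fun x => by positivity)
  have hi : Integrable (fun ξ => r ξ * (1 + ξ ^ 2)⁻¹) :=
    hr.mul_bdd (c := 1) hc.aestronglyMeasurable (Filter.Eventually.of_forall hb)
  have hpos : 0 < ∫ ξ, r ξ * (1 + ξ ^ 2)⁻¹ := by
    have hnn : 0 ≤ fun ξ => r ξ * (1 + ξ ^ 2)⁻¹ := fun ξ => mul_nonneg (h0 ξ) (by positivity)
    refine lt_of_le_of_ne (integral_nonneg hnn) (fun he => ?_)
    have := (integral_eq_zero_iff_of_nonneg hnn hi).1 he.symm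
    have h2 : r =ᵐ[volume] 0 := by
      filter_upwards [this] with x hx
      have h3 : (1 + x ^ 2)⁻¹ ≠ 0 := by positivity
      simpa [h3] using hx
    rw [integral_congr_ae h2] at h1
    simp at h1
  refine ⟨(∫ ξ, r ξ * (1 + ξ ^ 2)⁻¹) / 2, by positivity, fun y => ?_⟩
  rw [← integral_sub_left_eq_self (fun θ => r (y - θ) * (1 + θ ^ 2)⁻¹) volume y]
  have e : (∫ ξ, r ξ * (1 + ξ ^ 2)⁻¹) / 2 * (1 + y ^ 2)⁻¹ = ∫ ξ, (r ξ * (1 + ξ ^ 2)⁻¹) * ((1 + y ^ 2)⁻¹ / 2) := by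
    rw [integral_mul_const]; ring
  rw [e]
  refine integral_mono (hi.mul_const _) ?_ (fun ξ => ?_)
  · simp only [sub_sub_cancel]
    refine hr.mul_bdd (c := 1) (hc.comp (continuous_const.sub continuous_id)).aestronglyMeasurable (Filter.Eventually.of_forall fun x => hb _)
  · simp only [sub_sub_cancel]
    rw [mul_assoc]
    refine mul_le_mul_of_nonneg_left ?_ (h0 ξ)
    rw [show (1 + ξ ^ 2)⁻¹ * ((1 + y ^ 2)⁻¹ / 2) = (2 * (1 + ξ ^ 2) * (1 + y ^ 2))⁻¹ by
      field_simp]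
    apply inv_anti₀ (by positivity)
    nlinarith [sq_nonneg (y + ξ), sq_nonneg (y * ξ)]

theorem affinity_lower {q0 q1 : ℝ → ℝ} (h0 : ∀ y, 0 < q0 y) (h1 : ∀ y, 0 ≤ q1 y)
    (i0 : Integrable q0) (i1 : Integrable q1) (e0 : ∫ y, q0 y = 1) (e1 : ∫ y, q1 y = 1)
    (iχ : Integrable (fun y => (q1 y - q0 y) ^ 2 / q0 y)) :
    Integrable (fun y => Real.sqrt (q0 y) * Real.sqrt (q1 y)) ∧
    1 - (∫ y, (q1 y - q0 y) ^ 2 / q0 y) / 2 ≤ ∫ y, Real.sqrt (q0 y) * Real.sqrt (q1 y) := by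
  have hS : Integrable (fun y => Real.sqrt (q0 y) * Real.sqrt (q1 y)) := by
    refine (i0.add i1).mono' ?_ (Filter.Eventually.of_forall fun y => ?_)
    · exact (Real.continuous_sqrt.comp_aestronglyMeasurable i0.1).mul
        (Real.continuous_sqrt.comp_aestronglyMeasurable i1.1)
    · rw [Real.norm_of_nonneg (by positivity)]
      simp only [Pi.add_apply]
      nlinarith [sq_nonneg (Real.sqrt (q0 y) - Real.sqrt (q1 y)), Real.sq_sqrt (h0 y).le,
        Real.sq_sqrt (h1 y)]
  refine ⟨hS, ?_⟩
  have hI : Integrable (fun y => (q0 y + q1 y) / 2 - (q1 y - q0 y) ^ 2 / q0 y / 2) :=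
    ((i0.add i1).div_const 2).sub (iχ.div_const 2)
  have : ∫ y, ((q0 y + q1 y) / 2 - (q1 y - q0 y) ^ 2 / q0 y / 2) =
      1 - (∫ y, (q1 y - q0 y) ^ 2 / q0 y) / 2 := by
    rw [integral_sub (f := fun y => (q0 y + q1 y) / 2) ((i0.add i1).div_const 2) (iχ.div_const 2), integral_div, integral_div,
      integral_add i0 i1, e0, e1]
    norm_num
  rw [← this]
  refine integral_mono hI hS fun y => ?_
  have a := Real.sq_sqrt (h0 y).le
  have b := Real.sq_sqrt (h1 y)
  have pa := Real.sqrt_pos.2 (h0 y)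
  have pb := Real.sqrt_nonneg (q1 y)
  simp only
  generalize Real.sqrt (q0 y) = s at *
  generalize Real.sqrt (q1 y) = t at *
  rw [← a, ← b]
  have hh : (t ^ 2 - s ^ 2) ^ 2 / s ^ 2 = (t - s) ^ 2 * ((t + s) / s) ^ 2 := by
    field_simp; ring
  have h2 : 1 ≤ (t + s) / s := by rw [le_div_iff₀ pa]; linarith
  have h3 : 1 ≤ ((t + s) / s) ^ 2 := one_le_pow₀ h2
  rw [hh]
  nlinarith [mul_le_mul_of_nonneg_left h3 (sq_nonneg (t - s))]

theorem two_point {n : ℕ} (hn : 1 ≤ n) {q0 q1 : ℝ → ℝ} (h0 : ∀ y, 0 < q0 y) (h1 : ∀ y, 0 ≤ q1 y)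
    (i0 : Integrable q0) (i1 : Integrable q1) (e0 : ∫ y, q0 y = 1) (e1 : ∫ y, q1 y = 1)
    (iχ : Integrable (fun y => (q1 y - q0 y) ^ 2 / q0 y))
    (hχ : ∫ y, (q1 y - q0 y) ^ 2 / q0 y ≤ 1 / n)
    (T : (Fin n → ℝ) → ℂ) (hT : Measurable T) (Φ0 Φ1 : ℂ) :
    ENNReal.ofReal (‖Φ1 - Φ0‖ ^ 2 / 16) ≤
        ∫⁻ y : Fin n → ℝ, ENNReal.ofReal (‖T y - Φ0‖ ^ 2 * ∏ i : Fin n, q0 (y i)) ∨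
    ENNReal.ofReal (‖Φ1 - Φ0‖ ^ 2 / 16) ≤
        ∫⁻ y : Fin n → ℝ, ENNReal.ofReal (‖T y - Φ1‖ ^ 2 * ∏ i : Fin n, q1 (y i)) := by
  obtain ⟨iS, hS⟩ := affinity_lower h0 h1 i0 i1 e0 e1 iχ
  by_contra hcon
  push Not at hcon
  obtain ⟨c0, c1⟩ := hcon
  set D := ‖Φ1 - Φ0‖ with hD
  have hDpos : 0 < D := by
    rcases (norm_nonneg (Φ1 - Φ0)).eq_or_lt with h | h
    · rw [← hD] at h
      rw [← h] at c0
      simp at c0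
    · exact h
  have iQ0 : Integrable (fun y : Fin n → ℝ => ∏ i, q0 (y i)) := Integrable.fintype_prod (fun _ => i0)
  have iQ1 : Integrable (fun y : Fin n → ℝ => ∏ i, q1 (y i)) := Integrable.fintype_prod (fun _ => i1)
  have iSS : Integrable (fun y : Fin n → ℝ => ∏ i, (Real.sqrt (q0 (y i)) * Real.sqrt (q1 (y i)))) :=
    Integrable.fintype_prod (f := fun _ y => Real.sqrt (q0 y) * Real.sqrt (q1 y)) (fun _ => iS)
  have eQ0 : ∫ y : Fin n → ℝ, ∏ i, q0 (y i) = 1 := by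
    rw [integral_fintype_prod_volume_eq_prod (fun _ => q0)]; simp [e0]
  have eQ1 : ∫ y : Fin n → ℝ, ∏ i, q1 (y i) = 1 := by
    rw [integral_fintype_prod_volume_eq_prod (fun _ => q1)]; simp [e1]
  have eSS : (1/2 : ℝ) ≤ ∫ y : Fin n → ℝ, ∏ i, (Real.sqrt (q0 (y i)) * Real.sqrt (q1 (y i))) := by
    rw [integral_fintype_prod_volume_eq_prod (fun _ y => Real.sqrt (q0 y) * Real.sqrt (q1 y))]
    simp only [Finset.prod_const, Finset.card_univ, Fintype.card_fin]
    have hn' : (1 : ℝ) ≤ n := by exact_mod_cast hn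
    have hle : (1 : ℝ) / n ≤ 1 := by rw [div_le_one (by linarith)]; exact hn'
    have hb : 1 + (-(1 / (n:ℝ) / 2)) ≤ ∫ y, Real.sqrt (q0 y) * Real.sqrt (q1 y) := by linarith
    have hp := one_add_mul_le_pow (a := -(1 / (n:ℝ) / 2)) (by linarith) n
    have hq : (n : ℝ) * (-(1 / (n:ℝ) / 2)) = -(1/2) := by field_simp
    have := pow_le_pow_left₀ (by linarith) hb n
    linarith
  have key : ∀ (Φ : ℂ) (q : ℝ → ℝ), (∀ y, 0 ≤ q y) → Integrable (fun y : Fin n → ℝ => ∏ i, q (y i)) →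
      ∫⁻ y : Fin n → ℝ, ENNReal.ofReal (‖T y - Φ‖ ^ 2 * ∏ i : Fin n, q (y i)) < ENNReal.ofReal (D ^ 2 / 16) →
      Integrable (fun y : Fin n → ℝ => ‖T y - Φ‖ ^ 2 * ∏ i : Fin n, q (y i)) ∧
      ∫ y : Fin n → ℝ, ‖T y - Φ‖ ^ 2 * ∏ i : Fin n, q (y i) < D ^ 2 / 16 := by
    intro Φ q hq iq hlt
    have hm : AEStronglyMeasurable (fun y : Fin n → ℝ => ‖T y - Φ‖ ^ 2 * ∏ i : Fin n, q (y i)) volume :=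
      ((hT.sub_const Φ).norm.pow_const 2).aestronglyMeasurable.mul iq.1
    have hnn : 0 ≤ᵐ[volume] (fun y : Fin n → ℝ => ‖T y - Φ‖ ^ 2 * ∏ i : Fin n, q (y i)) :=
      Filter.Eventually.of_forall fun y => mul_nonneg (by positivity) (Finset.prod_nonneg fun i _ => hq _)
    refine ⟨⟨hm, ?_⟩, ?_⟩
    · rw [hasFiniteIntegral_iff_ofReal hnn]
      exact hlt.trans_le le_top
    · rw [integral_eq_lintegral_of_nonneg_ae hnn hm]
      exact (ENNReal.lt_ofReal_iff_toReal_lt (hlt.trans_le le_top).ne).1 hlt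
  obtain ⟨j0, k0⟩ := key Φ0 q0 (fun y => (h0 y).le) iQ0 c0
  obtain ⟨j1, k1⟩ := key Φ1 q1 h1 iQ1 c1
  have hpt : ∀ y : Fin n → ℝ, D * ∏ i, (Real.sqrt (q0 (y i)) * Real.sqrt (q1 (y i))) ≤
      (2 / D) * (‖T y - Φ0‖ ^ 2 * ∏ i : Fin n, q0 (y i)) + (2 / D) * (‖T y - Φ1‖ ^ 2 * ∏ i : Fin n, q1 (y i)) +
      (D / 8) * (∏ i : Fin n, q0 (y i)) + (D / 8) * (∏ i : Fin n, q1 (y i)) := by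
    intro y
    have a0 : ∏ i : Fin n, q0 (y i) = (∏ i : Fin n, Real.sqrt (q0 (y i))) ^ 2 := by
      rw [← Finset.prod_pow]; exact Finset.prod_congr rfl fun i _ => (Real.sq_sqrt (h0 _).le).symm
    have a1 : ∏ i : Fin n, q1 (y i) = (∏ i : Fin n, Real.sqrt (q1 (y i))) ^ 2 := by
      rw [← Finset.prod_pow]; exact Finset.prod_congr rfl fun i _ => (Real.sq_sqrt (h1 _)).symm
    rw [Finset.prod_mul_distrib, a0, a1]
    have b0 : 0 ≤ ∏ i : Fin n, Real.sqrt (q0 (y i)) := Finset.prod_nonneg fun i _ => Real.sqrt_nonneg _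
    have b1 : 0 ≤ ∏ i : Fin n, Real.sqrt (q1 (y i)) := Finset.prod_nonneg fun i _ => Real.sqrt_nonneg _
    have hDle : D ≤ ‖T y - Φ0‖ + ‖T y - Φ1‖ := by
      rw [hD]
      calc ‖Φ1 - Φ0‖ = ‖(T y - Φ0) - (T y - Φ1)‖ := by congr 1; ring
        _ ≤ _ := norm_sub_le _ _
    generalize ∏ i : Fin n, Real.sqrt (q0 (y i)) = s0 at *
    generalize ∏ i : Fin n, Real.sqrt (q1 (y i)) = s1 at *
    generalize ‖T y - Φ0‖ = x0 at *
    generalize ‖T y - Φ1‖ = x1 at *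
    have g0 : x0 * (s0 * s1) ≤ (2 / D) * (x0 ^ 2 * s0 ^ 2) + (D / 8) * s1 ^ 2 := by
      have : (2 / D) * (x0 ^ 2 * s0 ^ 2) + (D / 8) * s1 ^ 2 - x0 * (s0 * s1) = (4 * x0 * s0 - D * s1) ^ 2 / (8 * D) := by
        field_simp; ring
      have h : 0 ≤ (4 * x0 * s0 - D * s1) ^ 2 / (8 * D) := by positivity
      linarith
    have g1 : x1 * (s0 * s1) ≤ (2 / D) * (x1 ^ 2 * s1 ^ 2) + (D / 8) * s0 ^ 2 := by
      have : (2 / D) * (x1 ^ 2 * s1 ^ 2) + (D / 8) * s0 ^ 2 - x1 * (s0 * s1) = (4 * x1 * s1 - D * s0) ^ 2 / (8 * D) := by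
        field_simp; ring
      have h : 0 ≤ (4 * x1 * s1 - D * s0) ^ 2 / (8 * D) := by positivity
      linarith
    nlinarith [mul_le_mul_of_nonneg_right hDle (mul_nonneg b0 b1)]
  have hIbl := integral_mono (iSS.const_mul D) (((j0.const_mul (2 / D)).add (j1.const_mul (2 / D))).add
    (iQ0.const_mul (D / 8)) |>.add (iQ1.const_mul (D / 8))) hpt
  simp only [Pi.add_apply] at hIbl
  rw [integral_add, integral_add, integral_add, integral_const_mul, integral_const_mul, integral_const_mul,
    integral_const_mul, integral_const_mul, eQ0, eQ1] at hIbl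
  · have t0 := mul_lt_mul_of_pos_left k0 (by positivity : 0 < 2 / D)
    have t1 := mul_lt_mul_of_pos_left k1 (by positivity : 0 < 2 / D)
    have t2 : 2 / D * (D ^ 2 / 16) = D / 8 := by field_simp; norm_num
    have t3 := mul_le_mul_of_nonneg_left eSS hDpos.le
    linarith
  · exact j0.const_mul _
  · exact j1.const_mul _
  · exact (j0.const_mul _).add (j1.const_mul _)
  · exact iQ0.const_mul _
  · exact ((j0.const_mul _).add (j1.const_mul _)).add (iQ0.const_mul _)
  · exact iQ1.const_mul _

theorem bump_exists : ∃ (ψ ψ' : ℝ → ℝ) (C : ℝ), 0 ≤ C ∧ (∀ x, HasDerivAt ψ (ψ' x) x) ∧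
    (∀ x, 0 ≤ ψ x) ∧ (∀ x, ψ x ≤ 1) ∧ (∀ x, x ∉ Set.Icc (1:ℝ) 2 → ψ x = 0) ∧
    (∀ x, x ∉ Set.Icc (1:ℝ) 2 → ψ' x = 0) ∧ (∀ x, x ∈ Set.Icc (5/4:ℝ) (7/4) → ψ x = 1) ∧
    (∀ x, |ψ' x| ≤ C) := by
  let b : ContDiffBump (3/2 : ℝ) := ⟨1/4, 1/2, by norm_num, by norm_num⟩
  have hs : tsupport b = Set.Icc (1:ℝ) 2 := by
    rw [b.tsupport_eq, Real.closedBall_eq_Icc]; norm_num [b]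
  have hd : ContDiff ℝ 1 b := b.contDiff
  have hdc : Continuous (deriv b) := hd.continuous_deriv le_rfl
  have hsd : HasCompactSupport (deriv b) := b.hasCompactSupport.deriv
  obtain ⟨C, hC⟩ := hdc.bounded_above_of_compact_support hsd
  refine ⟨b, deriv b, C, (norm_nonneg _).trans (hC 0), fun x => (hd.differentiable (by norm_num) x).hasDerivAt,
    fun x => b.nonneg, fun x => b.le_one, ?_, ?_, ?_, hC⟩
  · intro x hx
    rw [← hs] at hx
    exact image_eq_zero_of_notMem_tsupport hx
  · intro x hx
    rw [← hs] at hx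
    by_contra h
    exact hx (support_deriv_subset h)
  · intro x hx
    apply b.one_of_mem_closedBall
    rw [Real.closedBall_eq_Icc]
    norm_num [b]
    exact hx

theorem V_props {ψ ψ' ρ ρ' : ℝ → ℝ} {C ω₀ ρbar m A : ℝ} (hω₀ : 0 < ω₀) (hC : 0 ≤ C)
    (hψ : ∀ x, HasDerivAt ψ (ψ' x) x)
    (h1 : ∀ x, 0 ≤ ψ x) (h2 : ∀ x, ψ x ≤ 1) (h3 : ∀ x, x ∉ Set.Icc (1:ℝ) 2 → ψ x = 0)
    (h4 : ∀ x, x ∉ Set.Icc (1:ℝ) 2 → ψ' x = 0) (h5 : ∀ x, |ψ' x| ≤ C)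
    (hρ : ∀ ω : ℝ, ω₀ < |ω| → HasDerivAt ρ (ρ' ω) ω) (hρb : ∀ ω : ℝ, ω₀ < |ω| → |ρ' ω| ≤ ρbar)
    (hm : ω₀ < m) (hm1 : 1 ≤ m) (hA : 0 ≤ A) :
    let V : ℝ → ℂ := fun ω => (A * ψ (ω / m) : ℝ) * Complex.exp (-(ρ ω : ℂ) * Complex.I)
    let V' : ℝ → ℂ := fun ω => ((A * (ψ' (ω / m) / m) : ℝ) - (A * ψ (ω / m) * ρ' ω : ℝ) * Complex.I) *
        Complex.exp (-(ρ ω : ℂ) * Complex.I)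
    (∀ ω, HasDerivAt V (V' ω) ω) ∧ (∀ ω, ‖V ω‖ ≤ A * (1 + C + |ρbar|)) ∧
    (∀ ω, ‖V' ω‖ ≤ A * (1 + C + |ρbar|)) ∧
    (∀ ω, ω ∉ Set.Icc m (2 * m) → V ω = 0) ∧ (∀ ω, ω ∉ Set.Icc m (2 * m) → V' ω = 0) := by
  intro V V'
  have hm0 : 0 < m := by linarith
  have hnot : ∀ ω, ω ∉ Set.Icc m (2 * m) → ω / m ∉ Set.Icc (1:ℝ) 2 := by
    intro ω h h'
    apply h
    rw [Set.mem_Icc, le_div_iff₀ hm0, div_le_iff₀ hm0] at h'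
    exact ⟨by linarith [h'.1], h'.2⟩
  have hz : ∀ ω, ω ∉ Set.Icc m (2 * m) → V ω = 0 := by
    intro ω h; simp [V, h3 _ (hnot ω h)]
  have hz' : ∀ ω, ω ∉ Set.Icc m (2 * m) → V' ω = 0 := by
    intro ω h; simp [V', h3 _ (hnot ω h), h4 _ (hnot ω h)]
  have hE : ∀ ω, ‖Complex.exp (-(ρ ω : ℂ) * Complex.I)‖ = 1 := by
    intro ω
    rw [← Complex.ofReal_neg, Complex.norm_exp_ofReal_mul_I]
  refine ⟨?_, ?_, ?_, hz, hz'⟩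
  · intro ω
    rcases lt_or_ge ω m with h | h
    · have e : V' ω = 0 := hz' ω fun h' => by linarith [h'.1]
      rw [e]
      have : V =ᶠ[nhds ω] fun _ => 0 := by
        filter_upwards [Iio_mem_nhds h] with x hx
        exact hz x fun h' => by linarith [h'.1, Set.mem_Iio.1 hx]
      exact (hasDerivAt_const ω (0:ℂ)).congr_of_eventuallyEq this
    · have hω : ω₀ < |ω| := by rw [abs_of_pos (by linarith)]; linarith
      have d1 : HasDerivAt (fun ω : ℝ => A * ψ (ω / m)) (A * (ψ' (ω / m) / m)) ω := by
        have := ((hψ (ω / m)).comp ω ((hasDerivAt_id ω).div_const m)).const_mul A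
        refine this.congr_deriv ?_
        simp [div_eq_mul_inv]
      have d2 : HasDerivAt (fun ω : ℝ => Complex.exp (-(ρ ω : ℂ) * Complex.I)) (Complex.exp (-(ρ ω : ℂ) * Complex.I) * (-(ρ' ω : ℂ) * Complex.I)) ω :=
        (((hρ ω hω).ofReal_comp.neg).mul_const Complex.I).cexp
      have := d1.ofReal_comp.mul d2
      refine this.congr_deriv ?_
      simp only [V']
      push_cast
      ring
  · intro ω
    simp only [V]
    rw [norm_mul, hE, mul_one, Complex.norm_real, Real.norm_of_nonneg (mul_nonneg hA (h1 _))]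
    refine mul_le_mul_of_nonneg_left ?_ hA
    have := h2 (ω / m); have := abs_nonneg ρbar
    linarith
  · intro ω
    by_cases hin : ω ∈ Set.Icc m (2 * m)
    · have hω : ω₀ < |ω| := by rw [abs_of_pos (by linarith [hin.1])]; linarith [hin.1]
      simp only [V']
      rw [norm_mul, hE, mul_one]
      refine (norm_sub_le _ _).trans ?_
      rw [norm_mul _ Complex.I, Complex.norm_I, mul_one, Complex.norm_real, Complex.norm_real, Real.norm_eq_abs, Real.norm_eq_abs,
        abs_mul, abs_mul, abs_mul, abs_of_nonneg hA, abs_div, abs_of_pos hm0, abs_of_nonneg (h1 _)]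
      have a1 : |ψ' (ω / m)| / m ≤ C := by
        rw [div_le_iff₀ hm0]
        nlinarith [h5 (ω / m)]
      have a2 : ψ (ω / m) * |ρ' ω| ≤ |ρbar| := by
        have := hρb ω hω
        have := le_abs_self ρbar
        nlinarith [h2 (ω / m), h1 (ω / m), abs_nonneg (ρ' ω)]
      nlinarith [mul_le_mul_of_nonneg_left a1 hA, mul_le_mul_of_nonneg_left a2 hA]
    · rw [hz' ω hin, norm_zero]; positivity

theorem ft_conj (t : ℝ → ℝ) (ω : ℝ) : ft t (-ω) = (starRingEnd ℂ) (ft t ω) := by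
  unfold ft
  rw [← integral_conj]
  congr 1; ext x
  rw [map_mul, ← Complex.exp_conj]
  simp

theorem re_ftc_ft {V : ℝ → ℂ} (hc : Continuous V) (hV : Integrable V) (hi : Integrable (ftc V)) (ω : ℝ) :
    ft (fun x => 2 * (ftc V x).re) ω = 2 * Real.pi * (V (-ω) + (starRingEnd ℂ) (V ω)) := by
  have e : ft (fun x => 2 * (ftc V x).re) ω = ftc (ftc V) ω + (starRingEnd ℂ) (ftc (ftc V) (-ω)) := by
    have hIbl : ∀ ω : ℝ, Integrable fun x : ℝ => Complex.exp (Complex.I * (ω : ℂ) * (x : ℂ)) * ftc V x := by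
      intro ω
      refine hi.bdd_mul (c := 1) ?_ (Filter.Eventually.of_forall fun p => (norm_exp_I _ _).le)
      exact (by fun_prop : Continuous fun p : ℝ => Complex.exp (Complex.I * (ω : ℂ) * (p : ℂ))).aestronglyMeasurable
    unfold ft
    conv_rhs => rw [ftc, ftc]
    rw [← integral_conj, ← integral_add (hIbl ω)]
    · congr 1; ext x
      rw [map_mul, ← Complex.exp_conj]
      have := Complex.add_conj (ftc V x)
      simp only [map_mul, Complex.conj_I, Complex.conj_ofReal]
      rw [← this]
      push_cast
      ring_nf
    · have := hIbl (-ω)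
      exact (Complex.conjLIE.integrable_comp_iff).2 this
  rw [e, ftc_inversion V hc hV hi, ftc_inversion V hc hV hi]
  have h2 : (starRingEnd ℂ) (2 : ℂ) = 2 := Complex.conj_ofNat 2
  simp [h2]
  ring

theorem cv_re_ftc {g : ℝ → ℝ} {V : ℝ → ℂ} (hg : Integrable g) (hV : Integrable V) (y : ℝ) :
    cv g (fun x => 2 * (ftc V x).re) y = 2 * (ftc (fun ω => V ω * ft g (-ω)) y).re := by
  rw [← cv_ftc hg hV]
  have hIbl : Integrable fun θ => (g (y - θ) : ℂ) * ftc V θ := by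
    refine (shift_integrable hg y).ofReal.mul_bdd (c := ∫ x, ‖V x‖) (ftc_continuous V hV).aestronglyMeasurable
      (Filter.Eventually.of_forall fun θ => ftc_norm_le V θ)
  have := integral_re hIbl
  simp only [RCLike.re_to_complex] at this
  rw [← this, cv, ← integral_const_mul]
  congr 1; ext θ
  simp
  ring

theorem gamma_bound {g : ℝ → ℝ} {Cg2 α m : ℝ} (hCg2 : 0 < Cg2) (hα : 0 ≤ α)
    (hgup : ∀ ω : ℝ, ‖ft g ω‖ ≤ Cg2 * (ω ^ 2 + 1) ^ (-(α / 2))) (hm1 : 1 ≤ m) {ω : ℝ} (hω : m ≤ ω) :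
    ‖ft g (-ω)‖ ≤ Cg2 * m ^ (-α) := by
  refine (hgup (-ω)).trans (mul_le_mul_of_nonneg_left ?_ hCg2.le)
  have hm0 : 0 < m := by linarith
  have e : m ^ (-α) = (m ^ 2) ^ (-(α / 2)) := by
    rw [← Real.rpow_natCast m 2, ← Real.rpow_mul hm0.le]
    congr 1; push_cast; ring
  rw [e]
  apply Real.rpow_le_rpow_of_nonpos (by positivity) (by nlinarith) (by linarith)

theorem K_props {g : ℝ → ℝ} {Cg Cg2 α m M : ℝ} {gd V V' : ℝ → ℂ}
    (hgd : ∀ ω : ℝ, HasDerivAt (ft g) (gd ω) ω)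
    (hgd_bdd : ∀ ω : ℝ, ‖gd ω‖ ≤ Cg * ‖ft g ω‖) (hCg2 : 0 < Cg2) (hα : 0 ≤ α)
    (hgup : ∀ ω : ℝ, ‖ft g ω‖ ≤ Cg2 * (ω ^ 2 + 1) ^ (-(α / 2))) (hm1 : 1 ≤ m)
    (hV : ∀ ω, HasDerivAt V (V' ω) ω) (hVb : ∀ ω, ‖V ω‖ ≤ M) (hVb' : ∀ ω, ‖V' ω‖ ≤ M)
    (hV0 : ∀ ω, ω ∉ Set.Icc m (2 * m) → V ω = 0) (hV0' : ∀ ω, ω ∉ Set.Icc m (2 * m) → V' ω = 0) :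
    Integrable (fun y => (1 + y ^ 2) * ‖ftc (fun ω => V ω * ft (gs (1 / m)) (-ω) * ft g (-ω)) y‖ ^ 2) ∧
    ∫ y, (1 + y ^ 2) * ‖ftc (fun ω => V ω * ft (gs (1 / m)) (-ω) * ft g (-ω)) y‖ ^ 2 ≤
      4 * Real.pi * ((M * (Cg2 * m ^ (-α)) * (3 + |Cg|)) ^ 2 * m) := by
  have hm0 : 0 < m := by linarith
  have hM : 0 ≤ M := (norm_nonneg _).trans (hVb 0)
  have he : ∀ ω : ℝ, ft (gs (1 / m)) (-ω) = ((Real.exp (-(ω / m) ^ 2 / 2) : ℝ) : ℂ) := by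
    intro ω
    rw [gs_ft (by positivity)]
    congr 3; field_simp
  simp_rw [he]
  set e : ℝ → ℝ := fun ω => Real.exp (-(ω / m) ^ 2 / 2) with hedef
  have hed : ∀ ω, HasDerivAt e (-(ω / m ^ 2) * e ω) ω := by
    intro ω
    have h1 : HasDerivAt (fun ω : ℝ => -(ω / m) ^ 2 / 2) (-(ω / m ^ 2)) ω := by
      have := (((hasDerivAt_id ω).div_const m).pow 2).neg.div_const 2
      refine this.congr_deriv ?_
      simp; field_simp
    refine h1.exp.congr_deriv ?_
    simp only [hedef]; ring
  have hγd : ∀ ω, HasDerivAt (fun ω => ft g (-ω)) (-gd (-ω)) ω := by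
    intro ω
    have := (hgd (-ω)).scomp ω (hasDerivAt_neg ω)
    refine this.congr_deriv ?_
    simp
  have he1 : ∀ ω, ‖(e ω : ℂ)‖ ≤ 1 := by
    intro ω
    rw [Complex.norm_real, Real.norm_of_nonneg (Real.exp_pos _).le, Real.exp_le_one_iff]
    have := sq_nonneg (ω / m)
    linarith
  have hG : 0 ≤ Cg2 * m ^ (-α) := by positivity
  set G := Cg2 * m ^ (-α) with hGdef
  have hCa := abs_nonneg Cg
  have hbound : 0 ≤ M * G * (3 + |Cg|) := by positivity
  have hγb : ∀ ω ∈ Set.Icc m (2 * m), ‖ft g (-ω)‖ ≤ G := fun ω h => gamma_bound hCg2 hα hgup hm1 h.1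
  have hγb' : ∀ ω ∈ Set.Icc m (2 * m), ‖-gd (-ω)‖ ≤ |Cg| * G := by
    intro ω h
    rw [norm_neg]
    refine (hgd_bdd (-ω)).trans ?_
    exact (mul_le_mul_of_nonneg_right (le_abs_self Cg) (norm_nonneg _)).trans (mul_le_mul_of_nonneg_left (hγb ω h) hCa)
  have heb' : ∀ ω ∈ Set.Icc m (2 * m), ‖((-(ω / m ^ 2) * e ω : ℝ) : ℂ)‖ ≤ 2 := by
    intro ω h
    rw [Complex.ofReal_mul, norm_mul]
    have h1 : ‖((-(ω / m ^ 2) : ℝ) : ℂ)‖ ≤ 2 := by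
      rw [Complex.norm_real, norm_neg, Real.norm_of_nonneg (div_nonneg (by linarith [h.1]) (by positivity)), div_le_iff₀ (by positivity)]
      nlinarith [h.2]
    nlinarith [he1 ω, norm_nonneg ((e ω : ℂ)), norm_nonneg ((-(ω / m ^ 2) : ℝ) : ℂ)]
  have hw := ftc_weighted (K := fun ω => V ω * (e ω : ℂ) * ft g (-ω))
    (K' := fun ω => (V' ω * (e ω : ℂ) + V ω * ((-(ω / m ^ 2) * e ω : ℝ) : ℂ)) * ft g (-ω) + V ω * (e ω : ℂ) * (-gd (-ω)))
    (a := m) (b := 2 * m) (M := M * G * (3 + |Cg|)) (by linarith) ?_ ?_ ?_ ?_ ?_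
  · refine ⟨hw.2.2.1, hw.2.2.2.trans (le_of_eq ?_)⟩
    ring
  · intro ω
    exact ((hV ω).mul (hed ω).ofReal_comp).mul (hγd ω)
  · intro ω
    by_cases h : ω ∈ Set.Icc m (2 * m)
    · rw [norm_mul, norm_mul]
      calc ‖V ω‖ * ‖(e ω : ℂ)‖ * ‖ft g (-ω)‖ ≤ M * 1 * G := by
            gcongr
            · exact hVb ω
            · exact he1 ω
            · exact hγb ω h
        _ ≤ _ := by nlinarith [mul_nonneg (mul_nonneg hM hG) hCa, mul_nonneg hM hG]
    · simp only [hV0 ω h]; simpa using hbound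
  · intro ω h; simp [hV0 ω h]
  · intro ω
    by_cases h : ω ∈ Set.Icc m (2 * m)
    · calc ‖(V' ω * (e ω : ℂ) + V ω * ((-(ω / m ^ 2) * e ω : ℝ) : ℂ)) * ft g (-ω) + V ω * (e ω : ℂ) * (-gd (-ω))‖
          ≤ (‖V' ω‖ * ‖(e ω : ℂ)‖ + ‖V ω‖ * ‖((-(ω / m ^ 2) * e ω : ℝ) : ℂ)‖) * ‖ft g (-ω)‖ + ‖V ω‖ * ‖(e ω : ℂ)‖ * ‖-gd (-ω)‖ := by
            refine (norm_add_le _ _).trans ?_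
            rw [norm_mul, norm_mul (V ω * _), norm_mul (V ω)]
            gcongr
            refine (norm_add_le _ _).trans ?_
            rw [norm_mul, norm_mul]
        _ ≤ (M * 1 + M * 2) * G + M * 1 * (|Cg| * G) := by
            gcongr
            · exact hVb' ω
            · exact he1 ω
            · exact hVb ω
            · exact heb' ω h
            · exact hγb ω h
            · exact hVb ω
            · exact he1 ω
            · exact hγb' ω h
        _ = _ := by ring
    · simp only [hV0 ω h, hV0' ω h]; simpa using hbound
  · intro ω h; simp [hV0 ω h, hV0' ω h]

theorem phi_integrable {φ : ℝ → ℝ} (h : ft φ 0 ≠ 0) : Integrable φ := by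
  by_contra hn
  apply h
  unfold ft
  apply integral_undef
  intro h'
  apply hn
  have : Integrable (fun x => (φ x : ℂ)) := by simpa using h'
  simpa using this.re

/-- the linear functional of the perturbation -/
theorem functional_lower {ψ ρ φ : ℝ → ℝ} {ω₀ m A a Cφ1 : ℝ} (hω₀ : 0 < ω₀)
    (hψc : Continuous ψ)
    (h1 : ∀ x, 0 ≤ ψ x) (h2 : ∀ x, ψ x ≤ 1) (h3 : ∀ x, x ∉ Set.Icc (1:ℝ) 2 → ψ x = 0)
    (h4 : ∀ x, x ∈ Set.Icc (5/4:ℝ) (7/4) → ψ x = 1)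
    (hρ_arg : ∀ ω : ℝ, ω₀ < |ω| → ρ ω = (ft φ ω).arg)
    (hCφ1 : 0 < Cφ1) (hφlow : ∀ ω : ℝ, Cφ1 * (ω ^ 2 + 1) ^ (-(a / 2)) ≤ ‖ft φ ω‖)
    (hφi : Integrable φ)
    (hm : ω₀ < m) (hm1 : 1 ≤ m) (hA : 0 ≤ A) (V : ℝ → ℂ)
    (hV : V = fun ω => ((A * ψ (ω / m) : ℝ) : ℂ) * Complex.exp (-(ρ ω : ℂ) * Complex.I)) :
    (Real.exp (-2) * (A * (Cφ1 * (5 ^ (-(|a| / 2)) * m ^ (-a)))) / 2) * m ≤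
      ‖(1 / (2 * Real.pi) : ℂ) * ∫ ω : ℝ, (ft (gs (1 / m)) ω * (2 * Real.pi * (V (-ω) + (starRingEnd ℂ) (V ω)))) * ft φ (-ω)‖ := by
  have hm0 : 0 < m := by linarith
  have hpi : (Real.pi : ℂ) ≠ 0 := by exact_mod_cast Real.pi_ne_zero
  set x : ℝ → ℝ := fun ω => A * ψ (ω / m) * ‖ft φ ω‖ with hx
  set e : ℝ → ℝ := fun ω => Real.exp (-(ω / m) ^ 2 / 2) with hedef
  have he : ∀ ω : ℝ, ft (gs (1 / m)) ω = ((e ω : ℝ) : ℂ) := by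
    intro ω
    rw [gs_ft (by positivity)]
    simp only [hedef]
    congr 3; field_simp
  have hnot : ∀ ω, ω ∉ Set.Icc m (2 * m) → ω / m ∉ Set.Icc (1:ℝ) 2 := by
    intro ω h h'
    apply h
    rw [Set.mem_Icc, le_div_iff₀ hm0, div_le_iff₀ hm0] at h'
    exact ⟨by linarith [h'.1], h'.2⟩
  have hX : ∀ ω, V ω * ft φ ω = (x ω : ℂ) := by
    intro ω
    by_cases h : ω ∈ Set.Icc m (2 * m)
    · have hω : ω₀ < |ω| := by rw [abs_of_pos (by linarith [h.1])]; linarith [h.1]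
      have hp := Complex.norm_mul_exp_arg_mul_I (ft φ ω)
      rw [← hρ_arg ω hω] at hp
      rw [hV]
      simp only [hx]
      conv_lhs => rw [← hp]
      have : Complex.exp (-(ρ ω : ℂ) * Complex.I) * Complex.exp ((ρ ω : ℂ) * Complex.I) = 1 := by
        rw [← Complex.exp_add]; simp
      push_cast
      linear_combination ((A : ℂ) * ψ (ω / m) * ‖ft φ ω‖) * this
    · rw [hV]; simp [hx, h3 _ (hnot ω h)]
  have hx0 : ∀ ω, 0 ≤ x ω := fun ω => mul_nonneg (mul_nonneg hA (h1 _)) (norm_nonneg _)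
  have hxc : Continuous x := by
    have : Continuous (ft φ) := ftc_continuous _ hφi.ofReal
    simp only [hx]
    fun_prop
  have hxs : ∀ ω, ω ∉ Set.Icc m (2 * m) → x ω = 0 := by
    intro ω h; simp [hx, h3 _ (hnot ω h)]
  have hxI : Integrable x := by
    apply hxc.integrable_of_hasCompactSupport
    exact HasCompactSupport.intro isCompact_Icc hxs
  have heb : ∀ ω, ‖e ω‖ ≤ 1 := by
    intro ω
    rw [Real.norm_of_nonneg (Real.exp_pos _).le, Real.exp_le_one_iff]
    have := sq_nonneg (ω / m)
    linarith
  have hec : Continuous e := by simp only [hedef]; fun_prop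
  have hI : Integrable (fun ω => e ω * (x (-ω) + x ω)) :=
    (hxI.comp_neg.add hxI).bdd_mul hec.aestronglyMeasurable (Filter.Eventually.of_forall heb)
  have e1 : (1 / (2 * Real.pi) : ℂ) * ∫ ω : ℝ, (ft (gs (1 / m)) ω * (2 * Real.pi * (V (-ω) + (starRingEnd ℂ) (V ω)))) * ft φ (-ω)
      = ((∫ ω, e ω * (x (-ω) + x ω) : ℝ) : ℂ) := by
    rw [← integral_const_mul, ← integral_complex_ofReal]
    congr 1; ext ω
    have a1 := hX (-ω)
    have a2 : (starRingEnd ℂ) (V ω) * ft φ (-ω) = (x ω : ℂ) := by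
      rw [ft_conj, ← map_mul, hX, Complex.conj_ofReal]
    rw [he]
    push_cast
    rw [← a1, ← a2]
    field_simp
  rw [e1, Complex.norm_real]
  refine le_trans ?_ (le_abs_self _)
  set c := Real.exp (-2) * (A * (Cφ1 * (5 ^ (-(|a| / 2)) * m ^ (-a)))) with hc
  have hcc : 0 ≤ c := by positivity
  have hind : Integrable (Set.indicator (Set.Icc (5/4*m) (7/4*m)) (fun _ => c)) :=
    (integrable_indicator_iff measurableSet_Icc).2 (by simp)
  have e2 : c / 2 * m = ∫ ω, Set.indicator (Set.Icc (5/4*m) (7/4*m)) (fun _ => c) ω := by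
    rw [integral_indicator measurableSet_Icc]
    simp
    rw [max_eq_left (by linarith)]
    ring
  rw [e2]
  refine integral_mono hind hI fun ω => ?_
  by_cases h : ω ∈ Set.Icc (5/4*m) (7/4*m)
  · rw [Set.indicator_of_mem h]
    have b1 : ψ (ω / m) = 1 := h4 _ ⟨by rw [le_div_iff₀ hm0]; exact h.1, by rw [div_le_iff₀ hm0]; exact h.2⟩
    have b2 : Real.exp (-2) ≤ e ω := by
      apply Real.exp_le_exp.2
      have : (ω / m) ^ 2 ≤ 2 ^ 2 := by
        apply pow_le_pow_left₀ (div_nonneg (by nlinarith [h.1]) hm0.le)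
        rw [div_le_iff₀ hm0]; nlinarith [h.2]
      linarith
    have b3 : (5:ℝ) ^ (-(|a| / 2)) * m ^ (-a) ≤ (ω ^ 2 + 1) ^ (-(a / 2)) := by
      have hr : ω ^ 2 + 1 = m ^ 2 * ((ω ^ 2 + 1) / m ^ 2) := by field_simp
      have r1 : 1 ≤ (ω ^ 2 + 1) / m ^ 2 := by
        rw [le_div_iff₀ (by positivity)]; nlinarith [h.1]
      have r2 : (ω ^ 2 + 1) / m ^ 2 ≤ 5 := by
        rw [div_le_iff₀ (by positivity)]; nlinarith [h.1, h.2]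
      rw [hr, Real.mul_rpow (by positivity) (by positivity)]
      have hmm : (m ^ 2) ^ (-(a / 2)) = m ^ (-a) := by
        rw [← Real.rpow_natCast m 2, ← Real.rpow_mul hm0.le]
        congr 1; push_cast; ring
      rw [hmm, mul_comm]
      refine mul_le_mul_of_nonneg_left ?_ (by positivity)
      calc (5:ℝ) ^ (-(|a| / 2)) ≤ ((ω ^ 2 + 1) / m ^ 2) ^ (-(|a| / 2)) :=
            Real.rpow_le_rpow_of_nonpos (by positivity) r2 (by have := abs_nonneg a; linarith)
        _ ≤ _ := Real.rpow_le_rpow_of_exponent_le r1 (by have := le_abs_self a; linarith)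
    have b4 : A * (Cφ1 * (5 ^ (-(|a| / 2)) * m ^ (-a))) ≤ x ω := by
      simp only [hx]
      rw [b1, mul_one]
      exact mul_le_mul_of_nonneg_left ((mul_le_mul_of_nonneg_left b3 hCφ1.le).trans (hφlow ω)) hA
    rw [hc]
    refine mul_le_mul b2 (b4.trans ?_) (by positivity) (Real.exp_pos _).le
    linarith [hx0 (-ω)]
  · rw [Set.indicator_of_notMem h]
    exact mul_nonneg (Real.exp_pos _).le (add_nonneg (hx0 _) (hx0 _))

theorem u_exists {g φ : ℝ → ℝ} (hg_int : Integrable g)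
    {Cg : ℝ} {gd : ℝ → ℂ}
    (hgd : ∀ ω : ℝ, HasDerivAt (ft g) (gd ω) ω)
    (hgd_bdd : ∀ ω : ℝ, ‖gd ω‖ ≤ Cg * ‖ft g ω‖)
    {ω₀ ρbar : ℝ} (hω₀ : 0 < ω₀)
    {ρ ρ' : ℝ → ℝ}
    (hρ_arg : ∀ ω : ℝ, ω₀ < |ω| → ρ ω = (ft φ ω).arg)
    (hρ'deriv : ∀ ω : ℝ, ω₀ < |ω| → HasDerivAt ρ (ρ' ω) ω)
    (hρb : ∀ ω : ℝ, ω₀ < |ω| → |ρ' ω| ≤ ρbar)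
    {Cg2 α : ℝ} (hCg2 : 0 < Cg2) (hα : 0 ≤ α)
    (hgup : ∀ ω : ℝ, ‖ft g ω‖ ≤ Cg2 * (ω ^ 2 + 1) ^ (-(α / 2)))
    {Cφ1 a : ℝ} (hCφ1 : 0 < Cφ1)
    (hφlow : ∀ ω : ℝ, Cφ1 * (ω ^ 2 + 1) ^ (-(a / 2)) ≤ ‖ft φ ω‖) (hφi : Integrable φ) :
    ∃ K k : ℝ, 0 < K ∧ 0 < k ∧ ∀ m A : ℝ, ω₀ < m → 1 ≤ m → 0 < A →
      ∃ u : ℝ → ℝ, Continuous u ∧ Integrable u ∧ ∫ x, u x = 0 ∧ ∫ x, |u x| ≤ K * A * Real.sqrt m ∧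
        Integrable (fun x => u x ^ 2) ∧ ∫ x, u x ^ 2 ≤ K * A ^ 2 * m ∧
        (∃ M, ∀ x, |u x| ≤ M) ∧
        Integrable (fun y => (1 + y ^ 2) * (cv g (cv (gs (1 / m)) u) y) ^ 2) ∧
        ∫ y, (1 + y ^ 2) * (cv g (cv (gs (1 / m)) u) y) ^ 2 ≤ K * A ^ 2 * (m * (m ^ (-α)) ^ 2) ∧
        k * A * (m * m ^ (-a)) ≤
          ‖(1 / (2 * Real.pi) : ℂ) * ∫ ω : ℝ, ft (cv (gs (1 / m)) u) ω * ft φ (-ω)‖ := by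
  obtain ⟨ψ, ψ', C, hC, hψ, h1, h2, h3, h4, h5, h6⟩ := bump_exists
  set C2 := 1 + C + |ρbar| with hC2
  have hC2p : 0 < C2 := by positivity
  have hpi := Real.pi_pos
  refine ⟨24 * C2 + 16 * Real.pi * C2 ^ 2 + 16 * Real.pi * (C2 * Cg2 * (3 + |Cg|)) ^ 2,
    Real.exp (-2) * (Cφ1 * 5 ^ (-(|a| / 2))) / 2, by positivity, by positivity, ?_⟩
  intro m A hm hm1 hA
  have hm0 : 0 < m := by linarith
  obtain ⟨hVd, hVb, hVb', hV0, hV0'⟩ :=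
    V_props hω₀ hC hψ h1 h2 h3 h4 h6 hρ'deriv hρb hm hm1 hA.le
  have hF := functional_lower hω₀ (continuous_iff_continuousAt.2 fun x => (hψ x).continuousAt)
    h1 h2 h3 h5 hρ_arg hCφ1 hφlow hφi hm hm1 hA.le _ rfl
  set V : ℝ → ℂ := fun ω => (A * ψ (ω / m) : ℝ) * Complex.exp (-(ρ ω : ℂ) * Complex.I) with hVdef
  set V' : ℝ → ℂ := fun ω => ((A * (ψ' (ω / m) / m) : ℝ) - (A * ψ (ω / m) * ρ' ω : ℝ) * Complex.I) *
        Complex.exp (-(ρ ω : ℂ) * Complex.I) with hV'def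
  have hVc : Continuous V := continuous_iff_continuousAt.2 fun x => (hVd x).continuousAt
  obtain ⟨hVi, hV2, hWi, hWle⟩ := ftc_weighted (by linarith : m ≤ 2 * m) hVd hVb hV0 hVb' hV0'
  obtain ⟨hKi, hKle⟩ := K_props hgd hgd_bdd hCg2 hα hgup hm1 hVd hVb hVb' hV0 hV0'
  have hUc : Continuous (ftc V) := ftc_continuous V hVi
  have hw : 0 < 4 * (A * C2) * Real.sqrt m := by positivity
  have hsq : Real.sqrt m ^ 2 = m := Real.sq_sqrt hm0.le
  have hWle' : ∫ x, (1 + x ^ 2) * ‖ftc V x‖ ^ 2 ≤ 4 * Real.pi * ((A * C2) ^ 2 * m) := by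
    refine hWle.trans (le_of_eq ?_); ring
  obtain ⟨hUi, hUle⟩ := L1_of_weighted hUc.aestronglyMeasurable hw hWi (by
    refine hWle'.trans ?_
    have : (4 * (A * C2) * Real.sqrt m) ^ 2 = 16 * ((A * C2) ^ 2 * m) := by
      rw [mul_pow, hsq]; ring
    rw [this]
    have : 0 ≤ (A * C2) ^ 2 * m := by positivity
    nlinarith [Real.pi_lt_four])
  set u : ℝ → ℝ := fun x => 2 * (ftc V x).re with hu
  have huc : Continuous u := continuous_const.mul (Complex.continuous_re.comp hUc)
  have habs : ∀ x, |u x| ≤ 2 * ‖ftc V x‖ := fun x => by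
    rw [hu]; simp only [abs_mul, abs_two]
    have := Complex.abs_re_le_norm (ftc V x); linarith
  have hui : Integrable u := hUi.re.const_mul 2
  have hu2 : ∀ x, u x ^ 2 ≤ 4 * ((1 + x ^ 2) * ‖ftc V x‖ ^ 2) := fun x => by
    have h := habs x
    have h' : u x ^ 2 ≤ (2 * ‖ftc V x‖) ^ 2 := sq_le_sq' (by linarith [neg_abs_le (u x)]) (by linarith [le_abs_self (u x)])
    nlinarith [mul_nonneg (sq_nonneg x) (sq_nonneg ‖ftc V x‖)]
  have hu2i : Integrable (fun x => u x ^ 2) :=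
    (hWi.const_mul 4).mono' (huc.pow 2).aestronglyMeasurable (Filter.Eventually.of_forall fun x => by
      rw [Real.norm_of_nonneg (sq_nonneg _)]; exact hu2 x)
  have hft : ∀ ω, ft u ω = 2 * Real.pi * (V (-ω) + (starRingEnd ℂ) (V ω)) :=
    re_ftc_ft hVc hVi hUi
  have hcv1 : cv (gs (1 / m)) u = fun y => 2 * (ftc (fun ω => V ω * ft (gs (1 / m)) (-ω)) y).re := by
    funext y; exact cv_re_ftc (gs_integrable _) hVi y
  have hgsc : Continuous (ft (gs (1 / m))) := ftc_continuous _ (gs_integrable _).ofReal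
  have hVgi : Integrable (fun ω => V ω * ft (gs (1 / m)) (-ω)) := by
    refine hVi.norm.mono' (hVc.mul (hgsc.comp continuous_neg)).aestronglyMeasurable
      (Filter.Eventually.of_forall fun ω => ?_)
    rw [norm_mul]
    refine mul_le_of_le_one_right (norm_nonneg _) ?_
    rw [gs_ft (by positivity), Complex.norm_real, Real.norm_of_nonneg (Real.exp_pos _).le]
    exact Real.exp_le_one_iff.2 (by have := sq_nonneg (1 / m * -ω); linarith)
  have hcv2 : ∀ y, cv g (cv (gs (1 / m)) u) y =
      2 * (ftc (fun ω => V ω * ft (gs (1 / m)) (-ω) * ft g (-ω)) y).re := by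
    intro y; rw [hcv1]; exact cv_re_ftc hg_int hVgi y
  have hd2 : ∀ y, (1 + y ^ 2) * (cv g (cv (gs (1 / m)) u) y) ^ 2 ≤
      4 * ((1 + y ^ 2) * ‖ftc (fun ω => V ω * ft (gs (1 / m)) (-ω) * ft g (-ω)) y‖ ^ 2) := by
    intro y; rw [hcv2]
    have h := Complex.abs_re_le_norm (ftc (fun ω => V ω * ft (gs (1 / m)) (-ω) * ft g (-ω)) y)
    have h' := pow_le_pow_left₀ (abs_nonneg _) h 2
    rw [sq_abs] at h'
    have : 0 ≤ 1 + y ^ 2 := by positivity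
    nlinarith [mul_le_mul_of_nonneg_left h' this]
  have hdm : AEStronglyMeasurable (fun y => (1 + y ^ 2) * (cv g (cv (gs (1 / m)) u) y) ^ 2) volume := by
    have : AEStronglyMeasurable (cv g (cv (gs (1 / m)) u)) volume :=
      (cv_integrable hg_int (cv_integrable (gs_integrable _) hui)).aestronglyMeasurable
    exact (by fun_prop : Continuous fun y : ℝ => 1 + y ^ 2).aestronglyMeasurable.mul (this.pow 2)
  have hdi := (hKi.const_mul 4).mono' hdm (Filter.Eventually.of_forall fun y => by
      rw [Real.norm_of_nonneg (by positivity)]; exact hd2 y)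
  have p1 : 0 ≤ 24 * C2 := by positivity
  have p2 : 0 ≤ 16 * Real.pi * C2 ^ 2 := by positivity
  have p3 : 0 ≤ 16 * Real.pi * (C2 * Cg2 * (3 + |Cg|)) ^ 2 := by positivity
  have hmk : ∀ c t : ℝ, c ≤ (24 * C2 + 16 * Real.pi * C2 ^ 2 + 16 * Real.pi * (C2 * Cg2 * (3 + |Cg|)) ^ 2) → 0 ≤ t → c * t ≤ (24 * C2 + 16 * Real.pi * C2 ^ 2 + 16 * Real.pi * (C2 * Cg2 * (3 + |Cg|)) ^ 2) * t := fun c t h h' =>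
    mul_le_mul_of_nonneg_right h h'
  refine ⟨u, huc, hui, ?_, ?_, hu2i, ?_, ?_, hdi, ?_, ?_⟩
  · have h := hft 0
    have hz : V 0 = 0 := hV0 0 (fun h => by linarith [h.1])
    rw [neg_zero, hz] at h
    have h' : ft u 0 = ((∫ x, u x : ℝ) : ℂ) := by
      unfold ft; rw [← integral_complex_ofReal]; simp
    rw [h'] at h
    simpa using h
  · calc ∫ x, |u x| ≤ ∫ x, 2 * ‖ftc V x‖ := integral_mono hui.abs (hUi.norm.const_mul 2) habs
      _ = 2 * ∫ x, ‖ftc V x‖ := integral_const_mul _ _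
      _ ≤ 24 * C2 * (A * Real.sqrt m) := by linarith
      _ ≤ _ := by
        refine (hmk (24 * C2) (A * Real.sqrt m) (by linarith) (by positivity)).trans (le_of_eq ?_)
        ring
  · calc ∫ x, u x ^ 2 ≤ ∫ x, 4 * ((1 + x ^ 2) * ‖ftc V x‖ ^ 2) := integral_mono hu2i (hWi.const_mul 4) hu2
      _ = 4 * ∫ x, (1 + x ^ 2) * ‖ftc V x‖ ^ 2 := integral_const_mul _ _
      _ ≤ 16 * Real.pi * C2 ^ 2 * (A ^ 2 * m) := by linarith
      _ ≤ _ := by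
        refine (hmk (16 * Real.pi * C2 ^ 2) (A ^ 2 * m) (by linarith) (by positivity)).trans (le_of_eq ?_)
        ring
  · exact ⟨2 * ∫ x, ‖V x‖, fun x => (habs x).trans (by have := ftc_norm_le V x; linarith)⟩
  · calc _ ≤ ∫ y, 4 * ((1 + y ^ 2) * ‖ftc (fun ω => V ω * ft (gs (1 / m)) (-ω) * ft g (-ω)) y‖ ^ 2) :=
          integral_mono hdi (hKi.const_mul 4) hd2
      _ = 4 * ∫ y, ((1 + y ^ 2) * ‖ftc (fun ω => V ω * ft (gs (1 / m)) (-ω) * ft g (-ω)) y‖ ^ 2) :=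
          integral_const_mul _ _
      _ ≤ 16 * Real.pi * (C2 * Cg2 * (3 + |Cg|)) ^ 2 * (A ^ 2 * (m * (m ^ (-α)) ^ 2)) := by
          refine (mul_le_mul_of_nonneg_left hKle (by norm_num)).trans (le_of_eq ?_); ring
      _ ≤ _ := by
        refine (hmk (16 * Real.pi * (C2 * Cg2 * (3 + |Cg|)) ^ 2) (A ^ 2 * (m * (m ^ (-α)) ^ 2)) (by linarith) (by positivity)).trans (le_of_eq ?_)
        ring
  · refine le_trans (le_of_eq ?_) (hF.trans (le_of_eq ?_))
    · ring
    · congr 3; funext ω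
      rw [cv_ft (gs_integrable _) hui, hft]

theorem poly_exp (s : ℝ) : ∃ Cs : ℝ, 0 < Cs ∧ ∀ x : ℝ, 0 ≤ x → (x + 1) ^ s ≤ Cs * Real.exp (x / 2) := by
  set k := ⌈s⌉₊
  refine ⟨2 ^ k * k.factorial * Real.exp (1 / 2), by positivity, fun x hx => ?_⟩
  have h1 : (x + 1) ^ s ≤ (x + 1) ^ k := by
    rw [← Real.rpow_natCast]
    exact Real.rpow_le_rpow_of_exponent_le (by linarith) (Nat.le_ceil s)
  have h2 := Real.pow_div_factorial_le_exp (x := (x + 1) / 2) (by linarith) k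
  rw [div_le_iff₀ (by positivity), div_pow, div_le_iff₀ (by positivity)] at h2
  refine h1.trans (h2.trans (le_of_eq ?_))
  rw [show (x + 1) / 2 = 1 / 2 + x / 2 by ring, Real.exp_add]; ring

theorem ft_norm_le {t : ℝ → ℝ} (ht : ∀ x, 0 ≤ t x) (ω : ℝ) : ‖ft t ω‖ ≤ ∫ x, t x := by
  rw [ft_eq]
  refine (ftc_norm_le _ _).trans (le_of_eq ?_)
  congr 1; funext x; rw [Complex.norm_real, Real.norm_of_nonneg (ht x)]

theorem ft_cont {t : ℝ → ℝ} (ht : Integrable t) : Continuous (ft t) := ftc_continuous _ ht.ofReal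

/-- The Gaussian weight used for all Sobolev bounds. -/
theorem gauss_int (τ : ℝ) (h : 0 < τ) : Integrable (fun ω : ℝ => Real.exp (-(τ * ω) ^ 2 / 2)) := by
  have := integrable_exp_neg_mul_sq (b := τ ^ 2 / 2) (by positivity)
  refine this.congr (Filter.Eventually.of_forall fun x => ?_)
  dsimp only; congr 1; ring

theorem smooth_bound (s : ℝ) (hs : 0 ≤ s) : ∃ Cs : ℝ, 0 < Cs ∧ ∀ (m : ℝ) (W : ℝ → ℝ), 1 ≤ m → 
    (∀ x, 0 ≤ W x) → Integrable W → Integrable (fun x => W x ^ 2) →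
    (∀ ω, ‖ft (cv (gs (1 / m)) W) ω‖ ≤ (∫ x, W x) * Real.exp (-(1 / m * ω) ^ 2 / 2)) ∧
    Integrable (fun ω => ‖ft (cv (gs (1 / m)) W) ω‖ ^ 2 * (ω ^ 2 + 1) ^ s) ∧
    ∫ ω, ‖ft (cv (gs (1 / m)) W) ω‖ ^ 2 * (ω ^ 2 + 1) ^ s ≤ Cs * m ^ (2 * s) * ∫ x, W x ^ 2 := by
  obtain ⟨Cs, hCs, hCs'⟩ := poly_exp s
  have hpi := Real.pi_pos
  refine ⟨Cs * (2 * Real.pi), by positivity, fun m W hm hW0 hWi hW2 => ?_⟩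
  have hm0 : 0 < m := by linarith
  have hf : ∀ ω, ‖ft (cv (gs (1 / m)) W) ω‖ = Real.exp (-(1 / m * ω) ^ 2 / 2) * ‖ft W ω‖ := fun ω => by
    rw [cv_ft (gs_integrable _) hWi, norm_mul, gs_ft (by positivity), Complex.norm_real,
      Real.norm_of_nonneg (Real.exp_pos _).le]
  obtain ⟨pi1, pi2⟩ := ftc_plancherel (fun x => (W x : ℂ)) hWi.ofReal (by
    rw [memLp_two_iff_integrable_sq_norm hWi.ofReal.aestronglyMeasurable]
    refine hW2.congr (Filter.Eventually.of_forall fun x => ?_)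
    simp)
  have pi3 : ∫ x, ‖(W x : ℂ)‖ ^ 2 = ∫ x, W x ^ 2 := by congr 1; funext x; simp
  rw [pi3] at pi2
  have hpt : ∀ ω, ‖ft (cv (gs (1 / m)) W) ω‖ ^ 2 * (ω ^ 2 + 1) ^ s ≤
      (Cs * m ^ (2 * s)) * ‖ft W ω‖ ^ 2 := fun ω => by
    rw [hf]
    have e1 : (ω ^ 2 + 1) ^ s ≤ m ^ (2 * s) * ((ω / m) ^ 2 + 1) ^ s := by
      rw [Real.rpow_mul hm0.le, ← Real.mul_rpow (by positivity) (by positivity)]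
      refine Real.rpow_le_rpow (by positivity) ?_ hs
      rw [Real.rpow_two, mul_add, ← mul_pow, mul_div_cancel₀ _ hm0.ne']
      nlinarith
    have e2 := hCs' ((ω / m) ^ 2) (by positivity)
    have e3 : Real.exp (-(1 / m * ω) ^ 2 / 2) ^ 2 * Real.exp ((ω / m) ^ 2 / 2) ≤ 1 := by
      rw [← Real.exp_nat_mul, ← Real.exp_add]
      refine Real.exp_le_one_iff.2 ?_
      rw [show 1 / m * ω = ω / m by ring]; push_cast
      nlinarith [sq_nonneg (ω / m)]
    calc (Real.exp (-(1 / m * ω) ^ 2 / 2) * ‖ft W ω‖) ^ 2 * (ω ^ 2 + 1) ^ s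
        ≤ (Real.exp (-(1 / m * ω) ^ 2 / 2) * ‖ft W ω‖) ^ 2 * (m ^ (2 * s) * (Cs * Real.exp ((ω / m) ^ 2 / 2))) := by
          refine mul_le_mul_of_nonneg_left (e1.trans ?_) (by positivity)
          exact mul_le_mul_of_nonneg_left e2 (by positivity)
      _ = (Cs * m ^ (2 * s)) * ‖ft W ω‖ ^ 2 * (Real.exp (-(1 / m * ω) ^ 2 / 2) ^ 2 * Real.exp ((ω / m) ^ 2 / 2)) := by ring
      _ ≤ _ := mul_le_of_le_one_right (by positivity) e3
  have hIbl : Integrable (fun ω => ‖ft (cv (gs (1 / m)) W) ω‖ ^ 2 * (ω ^ 2 + 1) ^ s) := by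
    refine (pi1.const_mul (Cs * m ^ (2 * s))).mono' ?_ (Filter.Eventually.of_forall fun ω => ?_)
    · refine Continuous.aestronglyMeasurable ?_
      have := ft_cont (cv_integrable (gs_integrable (1 / m)) hWi)
      refine (this.norm.pow 2).mul ?_
      exact Continuous.rpow_const (by fun_prop) (fun x => Or.inr hs)
    · rw [Real.norm_of_nonneg (by positivity)]; exact hpt ω
  refine ⟨fun ω => ?_, hIbl, ?_⟩
  · rw [hf, mul_comm]
    exact mul_le_mul_of_nonneg_right (ft_norm_le hW0 ω) (Real.exp_pos _).le
  · calc _ ≤ ∫ ω, (Cs * m ^ (2 * s)) * ‖ft W ω‖ ^ 2 := integral_mono hIbl (pi1.const_mul _) hpt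
      _ = (Cs * m ^ (2 * s)) * ∫ ω, ‖ft W ω‖ ^ 2 := integral_const_mul _ _
      _ = (Cs * m ^ (2 * s)) * (2 * Real.pi * ∫ x, W x ^ 2) := by rw [← pi2]; rfl
      _ = _ := by ring

theorem cv_bdd {r w : ℝ → ℝ} {M : ℝ} (hr : ∀ x, |r x| ≤ M) (hw0 : ∀ x, 0 ≤ w x) (hw : Integrable w) (y : ℝ) :
    |cv r w y| ≤ M * ∫ x, w x := by
  unfold cv
  rw [← integral_const_mul, ← Real.norm_eq_abs]
  refine norm_integral_le_of_norm_le (hw.const_mul M) (Filter.Eventually.of_forall fun x => ?_)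
  rw [norm_mul, Real.norm_eq_abs, Real.norm_of_nonneg (hw0 x)]
  exact mul_le_mul_of_nonneg_right (hr _) (hw0 x)

theorem base_exists (s B : ℝ) (hs : 0 ≤ s) (hB : 0 < B) : ∃ (p : ℝ → ℝ) (σ c : ℝ), 0 < σ ∧ 0 < c ∧
    (∀ x, 0 ≤ p x) ∧ Integrable p ∧ ∫ x, p x = 1 ∧ (∃ M, ∀ x, |p x| ≤ M) ∧
    (∀ x, c * (1 + x ^ 2)⁻¹ ≤ p x) ∧
    (∀ ω, ‖ft p ω‖ ≤ Real.exp (-(σ * ω) ^ 2 / 2)) ∧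
    Integrable (fun ω => ‖ft p ω‖ ^ 2 * (ω ^ 2 + 1) ^ s) ∧
    ∫ ω, ‖ft p ω‖ ^ 2 * (ω ^ 2 + 1) ^ s ≤ B ^ 2 / 4 := by
  obtain ⟨Cs, hCs, hCs'⟩ := poly_exp s
  have hpi := Real.pi_pos
  set L := Cs * Real.sqrt (2 * Real.pi) with hL
  have hLp : 0 < L := by positivity
  set σ := 1 + 4 * L / B ^ 2 with hσ
  have hσ1 : 1 ≤ σ := by have : 0 < 4 * L / B ^ 2 := by positivity
                         linarith
  have hσ0 : 0 < σ := by linarith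
  set cau : ℝ → ℝ := fun x => Real.pi⁻¹ * (1 + x ^ 2)⁻¹ with hcau
  have c0 : ∀ x, 0 ≤ cau x := fun x => by positivity
  have ci : Integrable cau := integrable_inv_one_add_sq.const_mul _
  have c1 : ∫ x, cau x = 1 := by
    rw [hcau, integral_const_mul, integral_univ_inv_one_add_sq, inv_mul_cancel₀ hpi.ne']
  obtain ⟨c, hc, hcl⟩ := lower_conv (gs_nonneg σ) (gs_integrable σ) (gs_integral hσ0)
  have hft : ∀ ω, ‖ft (cv (gs σ) cau) ω‖ ≤ Real.exp (-(σ * ω) ^ 2 / 2) := fun ω => by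
    rw [cv_ft (gs_integrable _) ci, norm_mul, gs_ft hσ0, Complex.norm_real,
      Real.norm_of_nonneg (Real.exp_pos _).le]
    exact mul_le_of_le_one_right (Real.exp_pos _).le ((ft_norm_le c0 ω).trans c1.le)
  have hb : 0 < σ ^ 2 / 2 := by positivity
  have hgi := (integrable_exp_neg_mul_sq hb).const_mul Cs
  have hpt : ∀ ω, ‖ft (cv (gs σ) cau) ω‖ ^ 2 * (ω ^ 2 + 1) ^ s ≤ Cs * Real.exp (-(σ ^ 2 / 2) * ω ^ 2) := by
    intro ω
    calc _ ≤ Real.exp (-(σ * ω) ^ 2 / 2) ^ 2 * (Cs * Real.exp (ω ^ 2 / 2)) :=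
          mul_le_mul (pow_le_pow_left₀ (norm_nonneg _) (hft ω) 2) (hCs' _ (sq_nonneg _))
            (by positivity) (by positivity)
      _ = Cs * Real.exp (-(σ * ω) ^ 2 + ω ^ 2 / 2) := by
          rw [← Real.exp_nat_mul, Real.exp_add]; push_cast
          rw [show (2:ℝ) * (-(σ * ω) ^ 2 / 2) = -(σ * ω) ^ 2 by ring]; ring
      _ ≤ _ := by
          refine mul_le_mul_of_nonneg_left (Real.exp_le_exp.2 ?_) hCs.le
          have : 1 ≤ σ ^ 2 := by nlinarith
          nlinarith [mul_nonneg (sub_nonneg.2 this) (sq_nonneg ω)]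
  have hpi' := cv_integrable (gs_integrable σ) ci
  have hIbl : Integrable (fun ω => ‖ft (cv (gs σ) cau) ω‖ ^ 2 * (ω ^ 2 + 1) ^ s) := by
    refine hgi.mono' ?_ (Filter.Eventually.of_forall fun ω => ?_)
    · refine (((ft_cont hpi').norm.pow 2).mul ?_).aestronglyMeasurable
      exact Continuous.rpow_const (by fun_prop) (fun x => Or.inr hs)
    · rw [Real.norm_of_nonneg (by positivity)]; exact hpt ω
  obtain ⟨M, hM⟩ := gs_bdd σ
  refine ⟨cv (gs σ) cau, σ, c * Real.pi⁻¹, hσ0, by positivity, cv_nonneg (gs_nonneg _) c0, hpi', ?_,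
    ⟨_, cv_bdd hM c0 ci⟩, ?_, hft, hIbl, ?_⟩
  · rw [cv_integral (gs_integrable _) ci, gs_integral hσ0, c1, one_mul]
  · intro x
    have : cv (gs σ) cau x = Real.pi⁻¹ * ∫ θ, gs σ (x - θ) * (1 + θ ^ 2)⁻¹ := by
      unfold cv; rw [← integral_const_mul]; congr 1; funext θ; rw [hcau]; ring
    rw [this, mul_comm c, mul_assoc]
    exact mul_le_mul_of_nonneg_left (hcl x) (by positivity)
  · calc _ ≤ ∫ ω, Cs * Real.exp (-(σ ^ 2 / 2) * ω ^ 2) := integral_mono hIbl hgi hpt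
      _ = Cs * Real.sqrt (Real.pi / (σ ^ 2 / 2)) := by rw [integral_const_mul, integral_gaussian]
      _ = L / σ := by
          rw [show Real.pi / (σ ^ 2 / 2) = 2 * Real.pi / σ ^ 2 by field_simp, Real.sqrt_div (by positivity),
            Real.sqrt_sq hσ0.le]; ring
      _ ≤ B ^ 2 / 4 := by
          rw [div_le_iff₀ hσ0, hσ]
          have : B ^ 2 / 4 * (1 + 4 * L / B ^ 2) = B ^ 2 / 4 + L := by field_simp
          rw [this]; nlinarith [sq_nonneg B]

/-- The perturbed densities. -/
noncomputable def dens (p : ℝ → ℝ) (m : ℝ) (W : ℝ → ℝ) : ℝ → ℝ :=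
  fun x => (1 - ∫ z, W z) * p x + cv (gs (1 / m)) W x

theorem ft_add_smul {p h : ℝ → ℝ} (hp : Integrable p) (hh : Integrable h) (c : ℝ) (ω : ℝ) :
    ft (fun x => c * p x + h x) ω = c * ft p ω + ft h ω := by
  have key : ∀ t : ℝ → ℝ, Integrable t → Integrable (fun x : ℝ => Complex.exp (Complex.I * (ω : ℂ) * (x : ℂ)) * (t x : ℂ)) := by
    intro t ht
    have htc : Integrable (fun x => (t x : ℂ)) := ht.ofReal
    refine htc.norm.mono' ?_ (Filter.Eventually.of_forall fun x => ?_)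
    · exact (by fun_prop : Continuous fun x : ℝ => Complex.exp (Complex.I * (ω : ℂ) * (x : ℂ))).aestronglyMeasurable.mul
        htc.aestronglyMeasurable
    · rw [norm_mul, norm_exp_I, one_mul]
  unfold ft
  rw [← integral_const_mul, ← integral_add ((key p hp).const_mul _) (key h hh)]
  congr 1; funext x; push_cast; ring

theorem dens_ft {p W : ℝ → ℝ} (hp : Integrable p) (hW : Integrable W) (m ω : ℝ) :
    ft (dens p m W) ω = ((1 - ∫ z, W z : ℝ) : ℂ) * ft p ω + ft (cv (gs (1 / m)) W) ω :=
  ft_add_smul hp (cv_integrable (gs_integrable _) hW) _ ω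

theorem dens_props {g φ p W : ℝ → ℝ} {s B m σ c cg : ℝ}
    (hg0 : ∀ x, 0 ≤ g x) (hgi : Integrable g) (hg1 : ∫ x, g x = 1)
    (hcg : ∀ y, cg * (1 + y ^ 2)⁻¹ ≤ ∫ θ, g (y - θ) * (1 + θ ^ 2)⁻¹)
    (hφ : Integrable φ) (hm : 1 ≤ m) (hσ : 0 < σ) (hc : 0 < c)
    (hp0 : ∀ x, 0 ≤ p x) (hpi : Integrable p) (hp1 : ∫ x, p x = 1) (hpb : ∃ M, ∀ x, |p x| ≤ M)
    (hpl : ∀ x, c * (1 + x ^ 2)⁻¹ ≤ p x)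
    (hpft : ∀ ω, ‖ft p ω‖ ≤ Real.exp (-(σ * ω) ^ 2 / 2))
    (hps : Integrable (fun ω => ‖ft p ω‖ ^ 2 * (ω ^ 2 + 1) ^ s))
    (hpB : ∫ ω, ‖ft p ω‖ ^ 2 * (ω ^ 2 + 1) ^ s ≤ B ^ 2 / 4)
    (hW0 : ∀ x, 0 ≤ W x) (hWi : Integrable W) (hW1 : ∫ x, W x ≤ 1 / 2)
    (hS1 : ∀ ω, ‖ft (cv (gs (1 / m)) W) ω‖ ≤ (∫ x, W x) * Real.exp (-(1 / m * ω) ^ 2 / 2))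
    (hS2 : Integrable (fun ω => ‖ft (cv (gs (1 / m)) W) ω‖ ^ 2 * (ω ^ 2 + 1) ^ s))
    (hS3 : ∫ ω, ‖ft (cv (gs (1 / m)) W) ω‖ ^ 2 * (ω ^ 2 + 1) ^ s ≤ B ^ 2 / 4) :
    (∀ x, 0 ≤ dens p m W x) ∧ Integrable (dens p m W) ∧ ∫ x, dens p m W x = 1 ∧
    (∃ M, ∀ x, |dens p m W x| ≤ M) ∧
    ∫ ω, ‖ft (dens p m W) ω‖ ^ 2 * (ω ^ 2 + 1) ^ s ≤ B ^ 2 ∧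
    Integrable (fun ω => ‖ft (dens p m W) ω‖ * ‖ft φ ω‖) ∧
    Integrable (fun ω => ft (dens p m W) ω * ft φ (-ω)) ∧
    (∀ y, 0 ≤ cv g (dens p m W) y) ∧ Integrable (cv g (dens p m W)) ∧ ∫ y, cv g (dens p m W) y = 1 ∧
    (∀ y, (c / 2 * cg) * (1 + y ^ 2)⁻¹ ≤ cv g (dens p m W) y) := by
  have hm0 : 0 < m := by linarith
  set κ := ∫ z, W z with hκ
  have hκ0 : 0 ≤ κ := integral_nonneg hW0
  set H := cv (gs (1 / m)) W with hH
  have hH0 : ∀ x, 0 ≤ H x := cv_nonneg (gs_nonneg _) hW0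
  have hHi : Integrable H := cv_integrable (gs_integrable _) hWi
  have hH1 : ∫ x, H x = κ := by rw [hH, cv_integral (gs_integrable _) hWi, gs_integral (by positivity), one_mul]
  obtain ⟨Mg, hMg⟩ := gs_bdd (1 / m)
  obtain ⟨Mp, hMp⟩ := hpb
  have hf : dens p m W = fun x => (1 - κ) * p x + H x := rfl
  have f0 : ∀ x, 0 ≤ dens p m W x := fun x => by
    rw [hf]; exact add_nonneg (mul_nonneg (by linarith) (hp0 x)) (hH0 x)
  have fi : Integrable (dens p m W) := (hpi.const_mul _).add hHi
  have f1 : ∫ x, dens p m W x = 1 := by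
    rw [hf, integral_add (hpi.const_mul _) hHi, integral_const_mul, hp1, hH1]; ring
  have fb : ∀ x, |dens p m W x| ≤ Mp + Mg * κ := fun x => by
    rw [hf]
    refine (abs_add_le _ _).trans (add_le_add ?_ (cv_bdd hMg hW0 hWi x))
    rw [abs_mul, abs_of_nonneg (by linarith)]
    exact (mul_le_of_le_one_left (abs_nonneg _) (by linarith)).trans (hMp x)
  have fft : ∀ ω, ‖ft (dens p m W) ω‖ ≤ ‖ft p ω‖ + ‖ft H ω‖ := fun ω => by
    rw [dens_ft hpi hWi]
    refine (norm_add_le _ _).trans (add_le_add ?_ le_rfl)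
    rw [norm_mul, Complex.norm_real, Real.norm_of_nonneg (by linarith)]
    exact mul_le_of_le_one_left (norm_nonneg _) (by linarith)
  have hfc : Continuous (ft (dens p m W)) := ft_cont fi
  have hφc : Continuous (ft φ) := ft_cont hφ
  have fφ : Integrable (fun ω => ‖ft (dens p m W) ω‖ * ‖ft φ ω‖) := by
    have hE := ((gauss_int σ hσ).add ((gauss_int (1 / m) (by positivity)).const_mul κ)).mul_const (∫ x, ‖(φ x : ℂ)‖)
    refine hE.mono' (hfc.norm.mul hφc.norm).aestronglyMeasurable (Filter.Eventually.of_forall fun ω => ?_)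
    rw [Real.norm_of_nonneg (by positivity)]
    refine mul_le_mul ((fft ω).trans (add_le_add (hpft ω) (hS1 ω))) (ftc_norm_le _ ω) (norm_nonneg _) ?_
    simp only [Pi.add_apply]; positivity
  refine ⟨f0, fi, f1, ⟨_, fb⟩, ?_, fφ, ?_, cv_nonneg hg0 f0, cv_integrable hgi fi, ?_, ?_⟩
  · have hpt : ∀ ω, ‖ft (dens p m W) ω‖ ^ 2 * (ω ^ 2 + 1) ^ s ≤
        2 * (‖ft p ω‖ ^ 2 * (ω ^ 2 + 1) ^ s) + 2 * (‖ft H ω‖ ^ 2 * (ω ^ 2 + 1) ^ s) := fun ω => by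
      have e := pow_le_pow_left₀ (norm_nonneg _) (fft ω) 2
      have e2 : (‖ft p ω‖ + ‖ft H ω‖) ^ 2 ≤ 2 * ‖ft p ω‖ ^ 2 + 2 * ‖ft H ω‖ ^ 2 := by
        nlinarith [sq_nonneg (‖ft p ω‖ - ‖ft H ω‖)]
      have e3 : (0:ℝ) ≤ (ω ^ 2 + 1) ^ s := by positivity
      have := mul_le_mul_of_nonneg_right (e.trans e2) e3
      linarith
    have hi2 := (hps.const_mul 2).add (hS2.const_mul 2)
    calc _ ≤ ∫ ω, (2 * (‖ft p ω‖ ^ 2 * (ω ^ 2 + 1) ^ s) + 2 * (‖ft H ω‖ ^ 2 * (ω ^ 2 + 1) ^ s)) :=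
          integral_mono_of_nonneg (Filter.Eventually.of_forall fun ω => by positivity) hi2
            (Filter.Eventually.of_forall hpt)
      _ = 2 * (∫ ω, ‖ft p ω‖ ^ 2 * (ω ^ 2 + 1) ^ s) + 2 * ∫ ω, ‖ft H ω‖ ^ 2 * (ω ^ 2 + 1) ^ s := by
          rw [integral_add (hps.const_mul 2) (hS2.const_mul 2), integral_const_mul, integral_const_mul]
      _ ≤ _ := by linarith
  · refine fφ.mono' (hfc.mul (hφc.comp continuous_neg)).aestronglyMeasurable (Filter.Eventually.of_forall fun ω => ?_)
    rw [norm_mul, ft_conj, RCLike.norm_conj]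
  · rw [cv_integral hgi fi, hg1, f1, one_mul]
  · intro y
    have hinvb : ∀ x : ℝ, |(1 + x ^ 2)⁻¹| ≤ (1:ℝ) := fun x => by
      rw [abs_of_nonneg (by positivity)]; exact inv_le_one_of_one_le₀ (by nlinarith [sq_nonneg x])
    have hi := mul_bdd_integrable hgi integrable_inv_one_add_sq.aestronglyMeasurable hinvb y
    calc (c / 2 * cg) * (1 + y ^ 2)⁻¹ = c / 2 * (cg * (1 + y ^ 2)⁻¹) := by ring
      _ ≤ c / 2 * ∫ θ, g (y - θ) * (1 + θ ^ 2)⁻¹ := mul_le_mul_of_nonneg_left (hcg y) (by positivity)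
      _ = ∫ θ, c / 2 * (g (y - θ) * (1 + θ ^ 2)⁻¹) := (integral_const_mul _ _).symm
      _ ≤ ∫ θ, g (y - θ) * dens p m W θ := by
        refine integral_mono (hi.const_mul _) (mul_bdd_integrable hgi fi.aestronglyMeasurable fb y) fun θ => ?_
        have e : c / 2 * (1 + θ ^ 2)⁻¹ ≤ dens p m W θ := by
          rw [hf]; dsimp only
          have h1 := hpl θ
          have h2 := hH0 θ
          have h3 := mul_le_mul_of_nonneg_right (by linarith : 1 / 2 ≤ 1 - κ) (hp0 θ)
          linarith
        have := mul_le_mul_of_nonneg_left e (hg0 (y - θ))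
        dsimp only; linarith
      _ = _ := rfl

theorem dens_diff {p u : ℝ → ℝ} (hu : Integrable u) (m x : ℝ) :
    dens p m (fun z => |u z| + u z) x - dens p m (fun z => |u z| - u z) x =
      2 * cv (gs (1 / m)) u x - 2 * (∫ z, u z) * p x := by
  have hp : Integrable (fun z => |u z| + u z) := hu.abs.add hu
  have hn : Integrable (fun z => |u z| - u z) := hu.abs.sub hu
  have e1 : ∫ z, (|u z| + u z) = (∫ z, |u z|) + ∫ z, u z := integral_add hu.abs hu
  have e2 : ∫ z, (|u z| - u z) = (∫ z, |u z|) - ∫ z, u z := integral_sub hu.abs hu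
  have e : cv (gs (1 / m)) (fun z => |u z| + u z) x - cv (gs (1 / m)) (fun z => |u z| - u z) x =
      2 * cv (gs (1 / m)) u x := by
    obtain ⟨Mg, hMg⟩ := gs_bdd (1 / m)
    have i1 := bdd_mul_integrable hp (gs_integrable (1 / m)).aestronglyMeasurable hMg x
    have i2 := bdd_mul_integrable hn (gs_integrable (1 / m)).aestronglyMeasurable hMg x
    unfold cv
    rw [← integral_sub i1 i2, ← integral_const_mul]
    refine integral_congr_ae (Filter.Eventually.of_forall fun θ => ?_)
    dsimp only
    ring
  have e3 : ∀ W : ℝ → ℝ, dens p m W x = (1 - ∫ z, W z) * p x + cv (gs (1 / m)) W x := fun W => rfl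
  rw [e3, e3, e1, e2]
  linear_combination e

set_option maxHeartbeats 2000000 in
theorem middle (g φ : ℝ → ℝ)
    (hg_nonneg : ∀ x, 0 ≤ g x) (hg_int : Integrable g) (hg_one : (∫ x, g x) = 1)
    (Cg : ℝ) (gd : ℝ → ℂ)
    (hgd : ∀ ω : ℝ, HasDerivAt (ft g) (gd ω) ω)
    (hgd_bdd : ∀ ω : ℝ, ‖gd ω‖ ≤ Cg * ‖ft g ω‖)
    (ω₀ ρbar : ℝ) (hω₀ : 0 < ω₀)
    (ρ ρ' : ℝ → ℝ)
    (hρ_arg : ∀ ω : ℝ, ω₀ < |ω| → ρ ω = (ft φ ω).arg)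
    (hρ'deriv : ∀ ω : ℝ, ω₀ < |ω| → HasDerivAt ρ (ρ' ω) ω)
    (hρb : ∀ ω : ℝ, ω₀ < |ω| → |ρ' ω| ≤ ρbar)
    (Cg2 α : ℝ) (hCg2 : 0 < Cg2) (hα : 0 ≤ α)
    (hgup : ∀ ω : ℝ, ‖ft g ω‖ ≤ Cg2 * (ω ^ 2 + 1) ^ (-(α / 2)))
    (Cφ1 a : ℝ) (hCφ1 : 0 < Cφ1)
    (hφlow : ∀ ω : ℝ, Cφ1 * (ω ^ 2 + 1) ^ (-(a / 2)) ≤ ‖ft φ ω‖) (s B : ℝ) (hs : 0 ≤ s) (hB : 0 < B) :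
    ∃ c0 k : ℝ, 0 < c0 ∧ 0 < k ∧ ∀ (n : ℕ) (m A : ℝ), 1 ≤ n → ω₀ < m → 1 ≤ m → 0 < A →
      A ^ 2 * (m * m ^ (2 * s)) ≤ c0 → n * (A ^ 2 * (m * (m ^ (-α)) ^ 2)) ≤ c0 →
        ∀ T : (Fin n → ℝ) → ℂ, Measurable T →
          ∃ f : ℝ → ℝ, (∀ x, 0 ≤ f x) ∧ Integrable f ∧ (∫ x, f x) = 1 ∧
            (∫ ω : ℝ, ‖ft f ω‖ ^ 2 * (ω ^ 2 + 1) ^ s) ≤ B ^ 2 ∧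
            Integrable (fun ω : ℝ => ‖ft f ω‖ * ‖ft φ ω‖) ∧
            ENNReal.ofReal (k * (A * (m * m ^ (-a))) ^ 2) ≤
              ∫⁻ y : Fin n → ℝ,
                ENNReal.ofReal
                  (‖T y - (1 / (2 * Real.pi) : ℂ) * ∫ ω : ℝ, ft f ω * ft φ (-ω)‖ ^ 2 *
                    ∏ i : Fin n, (∫ θ : ℝ, g (y i - θ) * f θ)) := by
  have hφi : Integrable φ := phi_integrable (by
    intro h
    have := hφlow 0
    rw [h, norm_zero] at this
    have h2 : 0 < Cφ1 * ((0:ℝ) ^ 2 + 1) ^ (-(a / 2)) := by positivity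
    linarith)
  obtain ⟨K, k, hK, hk, hu⟩ := u_exists hg_int hgd hgd_bdd hω₀ hρ_arg hρ'deriv hρb hCg2 hα hgup hCφ1 hφlow hφi
  obtain ⟨p, σ, c, hσ, hc, hp0, hpi, hp1, hpb, hpl, hpft, hps, hpB⟩ := base_exists s B hs hB
  obtain ⟨Cs, hCs, hsm⟩ := smooth_bound s hs
  obtain ⟨cg, hcg, hcgl⟩ := lower_conv hg_nonneg hg_int hg_one
  set c' := c / 2 * cg with hc'
  have hc'0 : 0 < c' := by positivity
  refine ⟨min (1 / (4 * K ^ 2)) (min (B ^ 2 / (16 * Cs * K)) (c' / (4 * K))), k ^ 2 / 4, by positivity,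
    by positivity, ?_⟩
  intro n m A hn hωm hm hA hc1 hc2 T hT
  have hm0 : 0 < m := by linarith
  have b1 := hc1.trans (min_le_left _ _)
  have b2 := hc1.trans ((min_le_right _ _).trans (min_le_left _ _))
  have b3 := hc2.trans ((min_le_right _ _).trans (min_le_right _ _))
  rw [le_div_iff₀ (by positivity)] at b1 b2 b3
  obtain ⟨u, huc, hui, hu1, huL1, hu2i, hu2, huM, hdi, hdle, hΦ⟩ := hu m A hωm hm hA
  have hm2s : 1 ≤ m ^ (2 * s) := Real.one_le_rpow hm (by linarith)
  have hsq : Real.sqrt m ^ 2 = m := Real.sq_sqrt hm0.le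
  have hκ : ∫ x, |u x| ≤ 1 / 2 := by
    refine huL1.trans ?_
    have : (K * A * Real.sqrt m) ^ 2 ≤ (1 / 2) ^ 2 := by
      rw [mul_pow, hsq]
      have : A ^ 2 * m ≤ A ^ 2 * (m * m ^ (2 * s)) :=
        mul_le_mul_of_nonneg_left (le_mul_of_one_le_right hm0.le hm2s) (by positivity)
      have := mul_le_mul_of_nonneg_right this (by positivity : 0 ≤ 4 * K ^ 2)
      nlinarith
    exact (pow_le_pow_iff_left₀ (by positivity) (by norm_num) two_ne_zero).1 this
  have hWgen : ∀ W : ℝ → ℝ, (∀ x, 0 ≤ W x) → Integrable W → Continuous W → (∀ x, W x ^ 2 ≤ 4 * u x ^ 2) →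
      ∫ x, W x = ∫ x, |u x| → _ := fun W h0 hi hcont hle h1 =>
    have hW2 : Integrable (fun x => W x ^ 2) := (hu2i.const_mul 4).mono' (hcont.pow 2).aestronglyMeasurable
      (Filter.Eventually.of_forall fun x => by rw [Real.norm_of_nonneg (sq_nonneg _)]; exact hle x)
    have hS := hsm m W hm h0 hi hW2
    have hW2' : ∫ x, W x ^ 2 ≤ 4 * (K * A ^ 2 * m) := by
      refine (integral_mono hW2 (hu2i.const_mul 4) hle).trans ?_
      rw [integral_const_mul]; linarith
    have hSB : ∫ ω, ‖ft (cv (gs (1 / m)) W) ω‖ ^ 2 * (ω ^ 2 + 1) ^ s ≤ B ^ 2 / 4 := by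
      refine hS.2.2.trans ((mul_le_mul_of_nonneg_left hW2' (by positivity)).trans ?_)
      nlinarith
    dens_props (φ := φ) hg_nonneg hg_int hg_one hcgl hφi hm hσ hc hp0 hpi hp1 hpb hpl hpft hps hpB
      h0 hi (h1.le.trans hκ) hS.1 hS.2.1 hSB
  set Wp : ℝ → ℝ := fun z => |u z| + u z with hWp
  set Wn : ℝ → ℝ := fun z => |u z| - u z with hWn
  have iWp : Integrable Wp := hui.abs.add hui
  have iWn : Integrable Wn := hui.abs.sub hui
  have eWp : ∫ x, Wp x = ∫ x, |u x| := by
    have : ∫ z, (|u z| + u z) = (∫ z, |u z|) + ∫ z, u z := integral_add hui.abs hui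
    rw [hWp, this, hu1, add_zero]
  have eWn : ∫ x, Wn x = ∫ x, |u x| := by
    have : ∫ z, (|u z| - u z) = (∫ z, |u z|) - ∫ z, u z := integral_sub hui.abs hui
    rw [hWn, this, hu1, sub_zero]
  have cWp : Continuous Wp := huc.abs.add huc
  have cWn : Continuous Wn := huc.abs.sub huc
  obtain ⟨pf0, pfi, pf1, ⟨pM, pfb⟩, pS, pφ, pφ', pq0, pqi, pq1, pql⟩ := hWgen Wp
    (fun x => by have := neg_abs_le (u x); simp only [hWp]; linarith) iWp cWp
    (fun x => by simp only [hWp]; nlinarith [sq_abs (u x), sq_nonneg (|u x| - u x)]) eWp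
  obtain ⟨nf0, nfi, nf1, ⟨nM, nfb⟩, nS, nφ, nφ', nq0, nqi, nq1, nql⟩ := hWgen Wn
    (fun x => by have := le_abs_self (u x); simp only [hWn]; linarith) iWn cWn
    (fun x => by simp only [hWn]; nlinarith [sq_abs (u x), sq_nonneg (|u x| + u x)]) eWn
  have hdiff : ∀ x, dens p m Wp x - dens p m Wn x = 2 * cv (gs (1 / m)) u x := fun x => by
    rw [dens_diff hui, hu1]; ring
  have hHi : Integrable (cv (gs (1 / m)) u) := cv_integrable (gs_integrable _) hui
  have hftd : ∀ ω, ft (dens p m Wp) ω - ft (dens p m Wn) ω = 2 * ft (cv (gs (1 / m)) u) ω := fun ω => by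
    have h : dens p m Wp = fun x => 2 * cv (gs (1 / m)) u x + dens p m Wn x := by
      funext x; rw [← hdiff x]; ring
    rw [h, ft_add_smul hHi nfi]; push_cast; ring
  have hqd : ∀ y, cv g (dens p m Wp) y - cv g (dens p m Wn) y = 2 * cv g (cv (gs (1 / m)) u) y := fun y => by
    have i1 := mul_bdd_integrable hg_int pfi.aestronglyMeasurable pfb y
    have i2 := mul_bdd_integrable hg_int nfi.aestronglyMeasurable nfb y
    have h : ∀ θ, g (y - θ) * dens p m Wp θ - g (y - θ) * dens p m Wn θ =
        2 * (g (y - θ) * cv (gs (1 / m)) u θ) := fun θ => by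
      rw [← mul_sub, hdiff]; ring
    have e : cv g (dens p m Wp) y - cv g (dens p m Wn) y =
        ∫ θ, (g (y - θ) * dens p m Wp θ - g (y - θ) * dens p m Wn θ) := (integral_sub i1 i2).symm
    rw [e]; simp_rw [h]; rw [integral_const_mul]; rfl
  have hqpos : ∀ y, 0 < cv g (dens p m Wn) y := fun y => lt_of_lt_of_le (by positivity) (nql y)
  have hχpt : ∀ y, (cv g (dens p m Wp) y - cv g (dens p m Wn) y) ^ 2 / cv g (dens p m Wn) y ≤
      4 / c' * ((1 + y ^ 2) * (cv g (cv (gs (1 / m)) u) y) ^ 2) := fun y => by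
    rw [hqd, div_le_iff₀ (hqpos y)]
    have h := nql y
    have hy : (0:ℝ) < 1 + y ^ 2 := by positivity
    have h1 : 1 ≤ (1 + y ^ 2) / c' * cv g (dens p m Wn) y := by
      calc (1:ℝ) = (1 + y ^ 2) / c' * (c' * (1 + y ^ 2)⁻¹) := by field_simp
        _ ≤ _ := mul_le_mul_of_nonneg_left h (by positivity)
    have := mul_le_mul_of_nonneg_left h1 (by positivity : 0 ≤ 4 * (cv g (cv (gs (1 / m)) u) y) ^ 2)
    calc (2 * cv g (cv (gs (1 / m)) u) y) ^ 2 = 4 * (cv g (cv (gs (1 / m)) u) y) ^ 2 * 1 := by ring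
      _ ≤ _ := this
      _ = _ := by ring
  have hχm : AEStronglyMeasurable (fun y => (cv g (dens p m Wp) y - cv g (dens p m Wn) y) ^ 2 / cv g (dens p m Wn) y) volume := by
    have h1 := pqi.aestronglyMeasurable.aemeasurable
    have h2 := nqi.aestronglyMeasurable.aemeasurable
    exact (((h1.sub h2).pow_const 2).div h2).aestronglyMeasurable
  have hχi := (hdi.const_mul (4 / c')).mono' hχm (Filter.Eventually.of_forall fun y => by
    rw [Real.norm_of_nonneg (div_nonneg (sq_nonneg _) (hqpos y).le)]; exact hχpt y)
  have hn0 : (0:ℝ) < n := by exact_mod_cast hn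
  have hχ : ∫ y, (cv g (dens p m Wp) y - cv g (dens p m Wn) y) ^ 2 / cv g (dens p m Wn) y ≤ 1 / n := by
    refine (integral_mono hχi (hdi.const_mul _) hχpt).trans ?_
    rw [integral_const_mul, le_div_iff₀ hn0]
    have h := mul_le_mul_of_nonneg_left hdle (by positivity : 0 ≤ 4 / c')
    have h' := mul_le_mul_of_nonneg_right h hn0.le
    refine h'.trans ?_
    calc 4 / c' * (K * A ^ 2 * (m * (m ^ (-α)) ^ 2)) * n
        = (n * (A ^ 2 * (m * (m ^ (-α)) ^ 2)) * (4 * K)) / c' := by ring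
      _ ≤ 1 := by rw [div_le_one hc'0]; exact b3
  have hΔ : k ^ 2 / 4 * (A * (m * m ^ (-a))) ^ 2 ≤
      ‖(1 / (2 * Real.pi) : ℂ) * (∫ ω : ℝ, ft (dens p m Wp) ω * ft φ (-ω)) -
        (1 / (2 * Real.pi) : ℂ) * (∫ ω : ℝ, ft (dens p m Wn) ω * ft φ (-ω))‖ ^ 2 / 16 := by
    have e : (∫ ω : ℝ, ft (dens p m Wp) ω * ft φ (-ω)) - (∫ ω : ℝ, ft (dens p m Wn) ω * ft φ (-ω)) =
        2 * ∫ ω : ℝ, ft (cv (gs (1 / m)) u) ω * ft φ (-ω) := by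
      rw [← integral_sub pφ' nφ', ← integral_const_mul]
      congr 1; funext ω; rw [← sub_mul, hftd]; ring
    rw [← mul_sub, e, mul_left_comm _ (2:ℂ), norm_mul, Complex.norm_two]
    have h := pow_le_pow_left₀ (by positivity) hΦ 2
    rw [mul_pow 2]
    refine le_trans (le_of_eq ?_) (le_trans (mul_le_mul_of_nonneg_left h (by norm_num : (0:ℝ) ≤ 1 / 4)) (le_of_eq ?_))
    · ring
    · ring
  rcases two_point hn hqpos pq0 nqi pqi nq1 pq1 hχi hχ T hT
    ((1 / (2 * Real.pi) : ℂ) * ∫ ω : ℝ, ft (dens p m Wn) ω * ft φ (-ω))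
    ((1 / (2 * Real.pi) : ℂ) * ∫ ω : ℝ, ft (dens p m Wp) ω * ft φ (-ω)) with h | h
  · exact ⟨dens p m Wn, nf0, nfi, nf1, nS, nφ, (ENNReal.ofReal_le_ofReal hΔ).trans h⟩
  · exact ⟨dens p m Wp, pf0, pfi, pf1, pS, pφ, (ENNReal.ofReal_le_ofReal hΔ).trans h⟩

theorem param {s a α ω₀ c0 γ β e : ℝ} (hc0 : 0 < c0) (hγ : 0 < γ)
    (h1 : -(2 * β) + 1 + 2 * s ≤ 0) (h2 : γ - 2 * β + 1 - 2 * α ≤ 0) (h3 : γ * e = -(2 * β) + 2 - 2 * a) :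
    ∃ N : ℕ, ∀ n : ℕ, N ≤ n → ∃ m A : ℝ, 1 ≤ n ∧ ω₀ < m ∧ 1 ≤ m ∧ 0 < A ∧
      A ^ 2 * (m * m ^ (2 * s)) ≤ c0 ∧ n * (A ^ 2 * (m * (m ^ (-α)) ^ 2)) ≤ c0 ∧
      (A * (m * m ^ (-a))) ^ 2 = c0 * (n : ℝ) ^ e := by
  have ht : Filter.Tendsto (fun n : ℕ => (n : ℝ) ^ (1 / γ)) Filter.atTop Filter.atTop :=
    (tendsto_rpow_atTop (by positivity)).comp tendsto_natCast_atTop_atTop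
  obtain ⟨N, hN⟩ := Filter.eventually_atTop.1 ((ht.eventually_gt_atTop (max 1 ω₀)).and
    (Filter.eventually_ge_atTop 1))
  refine ⟨N, fun n hn => ?_⟩
  obtain ⟨hm, hn1⟩ := hN n hn
  set m : ℝ := (n : ℝ) ^ (1 / γ) with hmd
  have hm1 : 1 < m := (le_max_left _ _).trans_lt hm
  have hm0 : 0 < m := by linarith
  have hnm : (n : ℝ) = m ^ γ := by
    rw [hmd, ← Real.rpow_mul (Nat.cast_nonneg n), one_div_mul_cancel hγ.ne', Real.rpow_one]
  have hA2 : (Real.sqrt c0 * m ^ (-β)) ^ 2 = c0 * m ^ (-(2 * β)) := by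
    rw [mul_pow, Real.sq_sqrt hc0.le, ← Real.rpow_natCast, ← Real.rpow_mul hm0.le]; congr 2; push_cast; ring
  refine ⟨m, Real.sqrt c0 * m ^ (-β), hn1, (le_max_right _ _).trans_lt hm, hm1.le, by positivity, ?_, ?_, ?_⟩
  · rw [hA2]
    calc c0 * m ^ (-(2 * β)) * (m * m ^ (2 * s)) = c0 * m ^ (-(2 * β) + 1 + 2 * s) := by
          rw [Real.rpow_add hm0, Real.rpow_add hm0, Real.rpow_one]; ring
      _ ≤ c0 := mul_le_of_le_one_right hc0.le (Real.rpow_le_one_of_one_le_of_nonpos hm1.le h1)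
  · rw [hA2, hnm]
    calc m ^ γ * (c0 * m ^ (-(2 * β)) * (m * (m ^ (-α)) ^ 2)) = c0 * m ^ (γ + -(2 * β) + 1 + -α + -α) := by
          rw [Real.rpow_add hm0, Real.rpow_add hm0, Real.rpow_add hm0, Real.rpow_add hm0, Real.rpow_one]; ring
      _ ≤ c0 := mul_le_of_le_one_right hc0.le (Real.rpow_le_one_of_one_le_of_nonpos hm1.le (by linarith))
  · rw [mul_pow, hA2, hnm, ← Real.rpow_mul hm0.le, h3,
      show -(2 * β) + 2 - 2 * a = -(2 * β) + 1 + 1 + -a + -a by ring,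
      Real.rpow_add hm0, Real.rpow_add hm0, Real.rpow_add hm0, Real.rpow_add hm0, Real.rpow_one]
    ring

theorem stmt_6 (g φ : ℝ → ℝ)
    (hg_nonneg : ∀ x, 0 ≤ g x) (hg_int : Integrable g) (hg_one : (∫ x, g x) = 1)
    (hg_bdd : BddAbove (Set.range g))
    (Cg : ℝ) (gd : ℝ → ℂ)
    (hgd : ∀ ω : ℝ, HasDerivAt (ft g) (gd ω) ω)
    (hgd_bdd : ∀ ω : ℝ, ‖gd ω‖ ≤ Cg * ‖ft g ω‖)
    (ω₀ ρbar : ℝ) (hω₀ : 0 < ω₀)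
    (ρ ρ' ρ'' : ℝ → ℝ)
    (hρ_arg : ∀ ω : ℝ, ω₀ < |ω| → ρ ω = (ft φ ω).arg)
    (hρ'deriv : ∀ ω : ℝ, ω₀ < |ω| → HasDerivAt ρ (ρ' ω) ω)
    (hρ''deriv : ∀ ω : ℝ, ω₀ < |ω| → HasDerivAt ρ' (ρ'' ω) ω)
    (hρ''cont : ContinuousOn ρ'' {ω : ℝ | ω₀ < |ω|})
    (hρbdd : ∀ ω : ℝ, ω₀ < |ω| → |ρ ω| ≤ ρbar ∧ |ρ' ω| ≤ ρbar ∧ |ρ'' ω| ≤ ρbar)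
    (Cg2 α : ℝ) (hCg2 : 0 < Cg2) (hα : 0 ≤ α)
    (hgup : ∀ ω : ℝ, ‖ft g ω‖ ≤ Cg2 * (ω ^ 2 + 1) ^ (-(α / 2)))
    (Cφ1 a : ℝ) (hCφ1 : 0 < Cφ1) (ha : a < α + 1 / 2)
    (hφlow : ∀ ω : ℝ, Cφ1 * (ω ^ 2 + 1) ^ (-(a / 2)) ≤ ‖ft φ ω‖) :
    ∀ s B : ℝ, 0 ≤ s → 0 < B →
      ∃ C : ℝ, 0 < C ∧ ∃ N : ℕ, ∀ n : ℕ, N ≤ n →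
        ∀ T : (Fin n → ℝ) → ℂ, Measurable T →
          ∃ f : ℝ → ℝ, (∀ x, 0 ≤ f x) ∧ Integrable f ∧ (∫ x, f x) = 1 ∧
            (∫ ω : ℝ, ‖ft f ω‖ ^ 2 * (ω ^ 2 + 1) ^ s) ≤ B ^ 2 ∧
            Integrable (fun ω : ℝ => ‖ft f ω‖ * ‖ft φ ω‖) ∧
            ENNReal.ofReal (C * (n : ℝ) ^ (-((2 * s + 2 * a - 1) / (2 * s + 2 * α)))) ≤
              ∫⁻ y : Fin n → ℝ,
                ENNReal.ofReal
                  (‖T y - (1 / (2 * Real.pi) : ℂ) * ∫ ω : ℝ, ft f ω * ft φ (-ω)‖ ^ 2 *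
                    ∏ i : Fin n, (∫ θ : ℝ, g (y i - θ) * f θ)) := by
  intro s B hs hB
  obtain ⟨c0, k, hc0, hk, hmid⟩ := middle g φ hg_nonneg hg_int hg_one Cg gd hgd hgd_bdd ω₀ ρbar hω₀ ρ ρ'
    hρ_arg hρ'deriv (fun ω h => (hρbdd ω h).2.1) Cg2 α hCg2 hα hgup Cφ1 a hCφ1 hφlow s B hs hB
  have hpar : ∃ N : ℕ, ∀ n : ℕ, N ≤ n → ∃ m A : ℝ, 1 ≤ n ∧ ω₀ < m ∧ 1 ≤ m ∧ 0 < A ∧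
      A ^ 2 * (m * m ^ (2 * s)) ≤ c0 ∧ n * (A ^ 2 * (m * (m ^ (-α)) ^ 2)) ≤ c0 ∧
      (A * (m * m ^ (-a))) ^ 2 = c0 * (n : ℝ) ^ (-((2 * s + 2 * a - 1) / (2 * s + 2 * α))) := by
    rcases (by positivity : 0 ≤ 2 * s + 2 * α).eq_or_lt with h | h
    · have hs0 : s = 0 := by linarith
      have hα0 : α = 0 := by linarith
      refine param (γ := 1 - 2 * a) (β := 1 - a) hc0 (by linarith) (by linarith) (by linarith) ?_
      rw [← h]; simp; ring
    · refine param (γ := 2 * s + 2 * α) (β := s + 1 / 2) hc0 h (by linarith) (by linarith) ?_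
      rw [mul_neg, mul_div_cancel₀ _ h.ne']; ring
  obtain ⟨N, hN⟩ := hpar
  refine ⟨k * c0, by positivity, N, fun n hn T hT => ?_⟩
  obtain ⟨m, A, hn1, hm, hm1, hA, e1, e2, e3⟩ := hN n hn
  obtain ⟨f, f1, f2, f3, f4, f5, f6⟩ := hmid n m A hn1 hm hm1 hA e1 e2 T hT
  refine ⟨f, f1, f2, f3, f4, f5, ?_⟩
  rw [e3, ← mul_assoc] at f6
  exact f6
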